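/- arXiv:1312.0843 — 2 statements merged into one kernel-verified Lean document; each statement's English description precedes it below -/
import Mathlib

section
/- Let σ and w be Radon measures on ℝ, and let I and J be finite intervals with I ⊆ (3J)^c. Then ∬_{I×J} |x−y|⁻¹ dσ(y) dw(x) ≤ (3/2) [w,σ]_{A₂}* σ(I)^{1/2} w(J)^{1/2}. -/
/-! Let `c` be the centre of `J`. For `x ∈ J` and `y ∉ 3J` one has `|x - c| ≤ |y - c| / 3`, hence
`|x - y|⁻¹ ≤ (3/2) |y - c|⁻¹`, and the double integral is at most `(3/2) w(J) ∫_I |y - c|⁻¹ dσ(y)`.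
By Cauchy–Schwarz the last integral is at most `(∫_I (y - c)⁻² dσ(y))^{1/2} σ(I)^{1/2}`, and since
`I` misses `[inf J, sup J]`, the `A₂` condition on this interval, which has the same centre `c`,
absorbs the first factor together with `w(J)^{1/2}`. -/

open MeasureTheory Set
open scoped ENNReal

noncomputable section

/-- The Muckenhoupt–Poisson `A₂` condition `[w,σ]_{A₂}* ≤ A`: for every finite interval `J`
with center `c_J`, `w(J) ∫_{Jᶜ} (y - c_J)⁻² dσ(y) ≤ A²`. -/
def A2star (w σ : Measure ℝ) (A : ℝ) : Prop :=
  ∀ J : Set ℝ, J.OrdConnected → Bornology.IsBounded J →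
    w J * ∫⁻ y in Jᶜ, ENNReal.ofReal (((y - (sInf J + sSup J) / 2) ^ 2)⁻¹) ∂σ ≤
      ENNReal.ofReal (A ^ 2)

section ENNReal

theorem ennreal_ofReal_mul_sqrt_toReal {r : ℝ} (hr : 0 ≤ r) {t : ℝ≥0∞} (ht : t ≠ ∞) :
    ENNReal.ofReal (r * √t.toReal) = ENNReal.ofReal r * t ^ (1 / 2 : ℝ) := by
  rw [ENNReal.ofReal_mul hr, Real.sqrt_eq_rpow,
    ← ENNReal.ofReal_rpow_of_nonneg ENNReal.toReal_nonneg one_half_pos.le,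
    ENNReal.ofReal_toReal ht]

theorem ennreal_rpow_half_mul_rpow_half (t : ℝ≥0∞) : t ^ (1 / 2 : ℝ) * t ^ (1 / 2 : ℝ) = t := by
  rw [← ENNReal.rpow_add_of_nonneg _ _ one_half_pos.le one_half_pos.le, add_halves,
    ENNReal.rpow_one]

theorem lintegral_le_lintegral_rpow_mul_measure_univ_rpow {α : Type*} [MeasurableSpace α]
    {μ : Measure α} {p q : ℝ} (hpq : p.HolderConjugate q) {f : α → ℝ≥0∞} (hf : AEMeasurable f μ) :
    ∫⁻ x, f x ∂μ ≤ (∫⁻ x, f x ^ p ∂μ) ^ (1 / p) * μ univ ^ (1 / q) := by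
  simpa using ENNReal.lintegral_mul_le_Lp_mul_Lq μ hpq hf (aemeasurable_const (b := 1))

end ENNReal

section PseudoMetricSpace

variable {X : Type*} [PseudoMetricSpace X] {x y c : X} {r k : ℝ}

theorem inv_dist_le_mul_inv_dist_of_mem_closedBall (hk : 1 < k)
    (hx : x ∈ Metric.closedBall c r) (hy : y ∉ Metric.closedBall c (k * r)) :
    (dist x y)⁻¹ ≤ k / (k - 1) * (dist y c)⁻¹ := by
  have hy_far : k * r < dist y c := not_le.1 hy
  have hk₀ : 0 < k := one_pos.trans hk
  have hx_near : dist x c ≤ dist y c / k :=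
    hx.trans ((le_div_iff₀' hk₀).2 hy_far.le)
  have hy_pos : 0 < dist y c :=
    (mul_nonneg hk₀.le (dist_nonneg.trans hx)).trans_lt hy_far
  have hlow : (k - 1) / k * dist y c ≤ dist x y := by
    calc (k - 1) / k * dist y c = dist y c - dist y c / k := by field_simp
      _ ≤ dist x y := by linarith [dist_triangle_left y c x]
  rw [← inv_div, ← mul_inv]
  exact inv_anti₀ (mul_pos (div_pos (sub_pos.2 hk) hk₀) hy_pos) hlow

variable [MeasurableSpace X] [OpensMeasurableSpace X] {μ ν : Measure X} {S E : Set X}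

theorem setLIntegral_inv_dist_le_mul_of_mem_closedBall (hk : 1 < k)
    (hx : x ∈ Metric.closedBall c r) (hE : E ⊆ (Metric.closedBall c (k * r))ᶜ) :
    ∫⁻ y in E, ENNReal.ofReal (dist x y)⁻¹ ∂μ ≤
      ENNReal.ofReal (k / (k - 1)) * ∫⁻ y in E, ENNReal.ofReal (dist y c)⁻¹ ∂μ := by
  have hmeas : Measurable fun y => ENNReal.ofReal (dist y c)⁻¹ := by fun_prop
  rw [← lintegral_const_mul _ hmeas]
  refine setLIntegral_mono (hmeas.const_mul _) fun y hy => ?_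
  rw [← ENNReal.ofReal_mul (div_nonneg (by linarith) (by linarith))]
  exact ENNReal.ofReal_le_ofReal (inv_dist_le_mul_inv_dist_of_mem_closedBall hk hx (hE hy))

theorem setLIntegral_setLIntegral_inv_dist_le_of_subset_closedBall (hk : 1 < k)
    (hS : S ⊆ Metric.closedBall c r) (hE : E ⊆ (Metric.closedBall c (k * r))ᶜ) :
    ∫⁻ x in S, (∫⁻ y in E, ENNReal.ofReal (dist x y)⁻¹ ∂μ) ∂ν ≤
      ENNReal.ofReal (k / (k - 1)) * (∫⁻ y in E, ENNReal.ofReal (dist y c)⁻¹ ∂μ) * ν S := by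
  rw [← setLIntegral_const]
  exact setLIntegral_mono measurable_const fun x hx =>
    setLIntegral_inv_dist_le_mul_of_mem_closedBall hk (hS hx) hE

theorem setLIntegral_inv_dist_le_rpow_half_mul (μ : Measure X) (E : Set X) (c : X) :
    ∫⁻ y in E, ENNReal.ofReal (dist y c)⁻¹ ∂μ ≤
      (∫⁻ y in E, ENNReal.ofReal (dist y c ^ 2)⁻¹ ∂μ) ^ (1 / 2 : ℝ) * μ E ^ (1 / 2 : ℝ) := by
  have hmeas : Measurable fun y => ENNReal.ofReal (dist y c)⁻¹ := by fun_prop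
  have hsq (y : X) :
      ENNReal.ofReal (dist y c)⁻¹ ^ (2 : ℝ) = ENNReal.ofReal (dist y c ^ 2)⁻¹ := by
    rw [ENNReal.rpow_two, ← ENNReal.ofReal_pow (inv_nonneg.2 dist_nonneg), inv_pow]
  simpa only [hsq, Measure.restrict_apply_univ] using
    lintegral_le_lintegral_rpow_mul_measure_univ_rpow (μ := μ.restrict E)
      Real.HolderConjugate.two_two hmeas.aemeasurable

end PseudoMetricSpace

theorem A2star.rpow_half_mul_rpow_half_le {w σ : Measure ℝ} {A a b : ℝ} (h : A2star w σ A)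
    (hA : 0 ≤ A) (hab : a ≤ b) {S E : Set ℝ} (hS : S ⊆ Icc a b) (hE : E ⊆ (Icc a b)ᶜ) :
    w S ^ (1 / 2 : ℝ) *
      (∫⁻ y in E, ENNReal.ofReal (dist y ((a + b) / 2) ^ 2)⁻¹ ∂σ) ^ (1 / 2 : ℝ) ≤
        ENNReal.ofReal A := by
  have hIcc : w (Icc a b) *
      ∫⁻ y in (Icc a b)ᶜ, ENNReal.ofReal (dist y ((a + b) / 2) ^ 2)⁻¹ ∂σ ≤
        ENNReal.ofReal (A ^ 2) := by
    simpa only [csInf_Icc hab, csSup_Icc hab, Real.dist_eq, sq_abs] using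
      h (Icc a b) ordConnected_Icc (Metric.isBounded_Icc a b)
  calc w S ^ (1 / 2 : ℝ) *
        (∫⁻ y in E, ENNReal.ofReal (dist y ((a + b) / 2) ^ 2)⁻¹ ∂σ) ^ (1 / 2 : ℝ)
      = (w S * ∫⁻ y in E, ENNReal.ofReal (dist y ((a + b) / 2) ^ 2)⁻¹ ∂σ) ^ (1 / 2 : ℝ) :=
        (ENNReal.mul_rpow_of_nonneg _ _ one_half_pos.le).symm
    _ ≤ ENNReal.ofReal (A ^ 2) ^ (1 / 2 : ℝ) := by
        refine ENNReal.rpow_le_rpow (le_trans ?_ hIcc) one_half_pos.le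
        gcongr
    _ = ENNReal.ofReal A := by
        rw [ENNReal.ofReal_rpow_of_nonneg (sq_nonneg A) one_half_pos.le, ← Real.sqrt_eq_rpow,
          Real.sqrt_sq hA]

theorem statement6_general (σ w : Measure ℝ) {A : ℝ} (hA : 0 ≤ A) (hA2 : A2star w σ A)
    {I J : Set ℝ} (hJ : Bornology.IsBounded J)
    (hIJ : ∀ y ∈ I, (3 / 2) * (sSup J - sInf J) < |y - (sInf J + sSup J) / 2|) :
    ∫⁻ x in J, (∫⁻ y in I, ENNReal.ofReal |x - y|⁻¹ ∂σ) ∂w ≤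
      ENNReal.ofReal ((3 / 2) * A) * σ I ^ (1 / 2 : ℝ) * w J ^ (1 / 2 : ℝ) := by
  have hab : sInf J ≤ sSup J := Real.sInf_le_sSup J hJ.bddBelow hJ.bddAbove
  have hJ_sub : J ⊆ Icc (sInf J) (sSup J) := subset_Icc_csInf_csSup hJ.bddBelow hJ.bddAbove
  set c := (sInf J + sSup J) / 2
  set r := (sSup J - sInf J) / 2 with hr
  have hball : Icc (sInf J) (sSup J) = Metric.closedBall c r := Real.Icc_eq_closedBall _ _
  have hI_far : I ⊆ (Metric.closedBall c (3 * r))ᶜ := fun y hy =>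
    not_le.2 (lt_of_eq_of_lt (by rw [hr]; ring) (hIJ y hy))
  have hI_sub : I ⊆ (Icc (sInf J) (sSup J))ᶜ := by
    rw [hball]
    exact hI_far.trans (compl_subset_compl.2 (Metric.closedBall_subset_closedBall (by linarith)))
  set P := ∫⁻ y in I, ENNReal.ofReal (dist y c ^ 2)⁻¹ ∂σ
  calc ∫⁻ x in J, (∫⁻ y in I, ENNReal.ofReal |x - y|⁻¹ ∂σ) ∂w
      ≤ ENNReal.ofReal (3 / (3 - 1)) * (∫⁻ y in I, ENNReal.ofReal (dist y c)⁻¹ ∂σ) * w J :=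
        setLIntegral_setLIntegral_inv_dist_le_of_subset_closedBall (by norm_num)
          (hball ▸ hJ_sub) hI_far
    _ = ENNReal.ofReal (3 / 2) * (∫⁻ y in I, ENNReal.ofReal (dist y c)⁻¹ ∂σ) * w J := by
        norm_num
    _ ≤ ENNReal.ofReal (3 / 2) * (P ^ (1 / 2 : ℝ) * σ I ^ (1 / 2 : ℝ)) * w J := by
        gcongr
        exact setLIntegral_inv_dist_le_rpow_half_mul σ I c
    _ = ENNReal.ofReal (3 / 2) * (w J ^ (1 / 2 : ℝ) * P ^ (1 / 2 : ℝ)) *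
          σ I ^ (1 / 2 : ℝ) * w J ^ (1 / 2 : ℝ) := by
        nth_rewrite 1 [← ennreal_rpow_half_mul_rpow_half (w J)]
        ring
    _ ≤ ENNReal.ofReal (3 / 2) * ENNReal.ofReal A * σ I ^ (1 / 2 : ℝ) * w J ^ (1 / 2 : ℝ) := by
        gcongr
        exact hA2.rpow_half_mul_rpow_half_le hA hab hJ_sub hI_sub
    _ = ENNReal.ofReal ((3 / 2) * A) * σ I ^ (1 / 2 : ℝ) * w J ^ (1 / 2 : ℝ) := by
        rw [ENNReal.ofReal_mul (by norm_num)]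

theorem statement6 (σ w : Measure ℝ) [IsLocallyFiniteMeasure σ] [IsLocallyFiniteMeasure w]
    (A' : ℝ) (hA' : 0 ≤ A') (hA2 : A2star w σ A')
    (I J : Set ℝ) (hI : I.OrdConnected) (hIbdd : Bornology.IsBounded I)
    (hJ : J.OrdConnected) (hJne : J.Nonempty) (hJbdd : Bornology.IsBounded J)
    -- `I ⊆ (3J)ᶜ`:
    (hIJ : ∀ y ∈ I, (3 / 2) * (sSup J - sInf J) < |y - (sInf J + sSup J) / 2|) :
    ∫⁻ x in J, (∫⁻ y in I, ENNReal.ofReal |x - y|⁻¹ ∂σ) ∂w ≤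
      ENNReal.ofReal ((3 / 2) * A' * Real.sqrt (σ I).toReal * Real.sqrt (w J).toReal) := by
  rw [ennreal_ofReal_mul_sqrt_toReal (by positivity) hJbdd.measure_lt_top.ne,
    ennreal_ofReal_mul_sqrt_toReal (by positivity) hIbdd.measure_lt_top.ne]
  exact statement6_general σ w hA' hA2 hJbdd hIJ
end
end

section
/- Let 1 < p < ∞ with conjugate exponent p′, let σ and w be locally finite Borel measures on ℝ^d, and let 𝒟 be the standard dyadic grid on ℝ^d. To each Q ∈ 𝒟 associate a number λ_Q ≥ 0 and two distinct dyadic children Q₊ ≠ Q₋ of Q. Define Λ(f,g) := Σ_{Q∈𝒟} λ_Q (∫_{Q₊} f dσ)(∫_{Q₋} g dw) and, for R ∈ 𝒟, Λ_R(f,g) := Σ_{Q⊆R} λ_Q (∫_{Q₊} f dσ)(∫_{Q₋} g dw). Then ‖Λ‖ := sup{|Λ(f,g)| : ‖f‖_{L^p(σ)} = ‖g‖_{L^{p′}(w)} = 1} is finite if and only if all three of the following are finite: 𝒰 := sup_{Q∈𝒟} λ_Q σ(Q₊)^{1/p′} w(Q₋)^{1/p}, 𝒯 := sup{σ(Q)^{−1/p}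 |Λ_Q(1,g)| : Q ∈ 𝒟, ‖g‖_{L^{p′}(w)} = 1}, and 𝒯* := sup{w(Q)^{−1/p′} |Λ_Q(f,1)| : Q ∈ 𝒟, ‖f‖_{L^p(σ)} = 1}; moreover ‖Λ‖ is comparable to 𝒰 + 𝒯 + 𝒯* up to constants depending only on p. -/
/-!
By monotone convergence only finitely many cubes matter. Given `f` and `g`, the level of a cube is
the largest `k` such that `2 ^ k` is exceeded by the average of `f` over some cube above it,
together with the maximal such cube; likewise for `g`. Maximal cubes of one level are disjoint,
whence the Carleson embedding: the sum of `(2 ^ k) ^ p * σ P` over all levels `(k, P)` is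
`≲ ‖f‖ ^ p`.

A dyadic cube strictly containing a child of `Q` contains `Q`. Hence, for the maximal cubes `P ⊇ Q₊`
for `f` and `R ⊇ Q₋` for `g`, there are only three cases: `Q, R ⊆ P`, or `Q, P ⊆ R`, or `P = Q₊` and
`R = Q₋`. In the last case `𝒰` turns the terms into a product of Carleson sequences, which Hölder's
inequality sums. In the first case fix the level `(k, P)` of `f`. On `Q₊` the function `f` may be
replaced by `2 ^ (k + 1)`, and `g` by a majorant built from its levels in this corona, so that `𝒯`
on `P` bounds the corona; Hölder's inequality sums the coronas, because each level of `g` occurs in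
at most two of them. The second case is symmetric, with `𝒯*`. Conversely, the three conditions
follow by testing `Λ` on indicators of cubes.
-/

open MeasureTheory Set
open scoped ENNReal

noncomputable section

/-- Index of a standard dyadic cube in `ℝ^d`: a generation `k : ℤ` and a position
`n : Fin d → ℤ`; the corresponding cube is `∏_i [n i · 2^k, (n i + 1) · 2^k)`. -/
abbrev DIdx (d : ℕ) := ℤ × (Fin d → ℤ)

/-- The standard dyadic cube in `ℝ^d` with index `q`. -/
def dCube (d : ℕ) (q : DIdx d) : Set (Fin d → ℝ) :=
  {x | ∀ i, (q.2 i : ℝ) * 2 ^ q.1 ≤ x i ∧ x i < ((q.2 i : ℝ) + 1) * 2 ^ q.1}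

/-- `c` is (the index of) a dyadic child of `q`. -/
def IsChildIdx (d : ℕ) (q c : DIdx d) : Prop :=
  c.1 = q.1 - 1 ∧ ∀ i, c.2 i = 2 * q.2 i ∨ c.2 i = 2 * q.2 i + 1

/-- The `L^p` "norm" of an `ℝ≥0∞`-valued function. -/
def lpNorm (d : ℕ) (μ : Measure (Fin d → ℝ)) (p : ℝ) (f : (Fin d → ℝ) → ℝ≥0∞) : ℝ≥0∞ :=
  (∫⁻ x, f x ^ p ∂μ) ^ (1 / p)

/-- The positive bilinear form
`Λ(f,g) = Σ_Q λ_Q (∫_{Q₊} f dσ) (∫_{Q₋} g dw)`. -/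
def posForm (d : ℕ) (σ w : Measure (Fin d → ℝ)) (lam : DIdx d → ℝ)
    (plusI minusI : DIdx d → DIdx d) (f g : (Fin d → ℝ) → ℝ≥0∞) : ℝ≥0∞ :=
  ∑' q : DIdx d, ENNReal.ofReal (lam q) * (∫⁻ x in dCube d (plusI q), f x ∂σ) *
    (∫⁻ x in dCube d (minusI q), g x ∂w)

/-- The localized form `Λ_R(f,g) = Σ_{Q ⊆ R} λ_Q (∫_{Q₊} f dσ) (∫_{Q₋} g dw)`. -/
def posFormLoc (d : ℕ) (σ w : Measure (Fin d → ℝ)) (lam : DIdx d → ℝ)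
    (plusI minusI : DIdx d → DIdx d) (r : DIdx d) (f g : (Fin d → ℝ) → ℝ≥0∞) : ℝ≥0∞ :=
  ∑' q : DIdx d,
    Set.indicator {q : DIdx d | dCube d q ⊆ dCube d r}
      (fun q => ENNReal.ofReal (lam q) * (∫⁻ x in dCube d (plusI q), f x ∂σ) *
        (∫⁻ x in dCube d (minusI q), g x ∂w)) q

/-! ### Geometric sums -/

/-- The constant of the geometric sum `∑ (2 ^ k) ^ b ≤ geomConst b * t ^ b` over integers `k` with
`2 ^ (k - 1) ≤ t`. -/
def geomConst (b : ℝ) : ℝ≥0∞ := 2 ^ b * (1 - (2 : ℝ≥0∞) ^ (-b))⁻¹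

lemma geomConst_ne_top {b : ℝ} (hb : 0 < b) : geomConst b ≠ ⊤ := by
  refine ENNReal.mul_ne_top (ENNReal.rpow_ne_top_of_nonneg hb.le ENNReal.ofNat_ne_top)
    (ENNReal.inv_ne_top.2 (tsub_pos_of_lt ?_).ne')
  exact ENNReal.rpow_lt_one_of_one_lt_of_neg ENNReal.one_lt_two (neg_lt_zero.2 hb)

lemma one_le_geomConst {b : ℝ} (hb : 0 < b) : 1 ≤ geomConst b :=
  one_le_mul (ENNReal.one_le_rpow one_le_two hb) (ENNReal.one_le_inv.2 tsub_le_self)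

lemma two_zpow_ne_top (k : ℤ) : (2 : ℝ≥0∞) ^ k ≠ ⊤ :=
  ENNReal.zpow_ne_top two_ne_zero ENNReal.ofNat_ne_top k

lemma two_zpow_eq_two_mul (k : ℤ) : (2 : ℝ≥0∞) ^ k = 2 * 2 ^ (k - 1) := by
  conv_lhs => rw [← add_sub_cancel 1 k, ENNReal.zpow_add two_ne_zero ENNReal.ofNat_ne_top, zpow_one]

lemma two_zpow_rpow (k : ℤ) (b : ℝ) : ((2 : ℝ≥0∞) ^ k) ^ b = 2 ^ (k * b) := by
  rw [← ENNReal.rpow_intCast, ENNReal.rpow_mul]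

lemma sum_two_zpow_rpow_le {b : ℝ} (hb : 0 < b) {F : Finset ℤ} {t : ℝ≥0∞}
    (hF : ∀ k ∈ F, (2 : ℝ≥0∞) ^ (k - 1) ≤ t) :
    ∑ k ∈ F, ((2 : ℝ≥0∞) ^ k) ^ b ≤ geomConst b * t ^ b := by
  rcases F.eq_empty_or_nonempty with rfl | hne
  · simp
  set m := F.max' hne
  have le_m : ∀ k ∈ F, k ≤ m := fun k hk => F.le_max' k hk
  have term_eq : ∀ k ∈ F,
      ((2 : ℝ≥0∞) ^ k) ^ b = (2 ^ m) ^ b * ((2 : ℝ≥0∞) ^ (-b)) ^ (m - k).toNat := by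
    intro k hk
    have cast_eq : (((m - k).toNat : ℕ) : ℝ) = m - k := by
      exact_mod_cast Int.toNat_of_nonneg (sub_nonneg.2 (le_m k hk))
    rw [two_zpow_rpow, two_zpow_rpow, ← ENNReal.rpow_mul_natCast, cast_eq,
      ← ENNReal.rpow_add _ _ two_ne_zero ENNReal.ofNat_ne_top]
    ring_nf
  have injOn : Set.InjOn (fun k => (m - k).toNat) F := by
    intro k hk k' hk' h
    have := le_m k hk
    have := le_m k' hk'
    dsimp only at h
    omega
  calc ∑ k ∈ F, ((2 : ℝ≥0∞) ^ k) ^ b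
      = (2 ^ m) ^ b * ∑ n ∈ F.image fun k => (m - k).toNat, ((2 : ℝ≥0∞) ^ (-b)) ^ n := by
        rw [Finset.sum_congr rfl term_eq, ← Finset.mul_sum, Finset.sum_image injOn]
    _ ≤ (2 ^ m) ^ b * (1 - (2 : ℝ≥0∞) ^ (-b))⁻¹ := by
        gcongr
        exact (ENNReal.sum_le_tsum _).trans_eq (ENNReal.tsum_geometric _)
    _ ≤ (2 * t) ^ b * (1 - (2 : ℝ≥0∞) ^ (-b))⁻¹ := by
        rw [two_zpow_eq_two_mul m]
        gcongr
        exact hF m (F.max'_mem hne)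
    _ = geomConst b * t ^ b := by
        rw [ENNReal.mul_rpow_of_nonneg _ _ hb.le, geomConst, mul_right_comm]

/-! ### Levels and maximal cubes -/

section Levels

variable {X : Type*} {𝒬 : Set (Set X)} {a : Set X → ℝ≥0∞} {R : Set X} {s t : ℤ × Set X}

/-- A family of cubes: measurable nonempty sets, any two of which are disjoint or comparable. -/
structure IsCubeFamily [MeasurableSpace X] (𝒬 : Set (Set X)) : Prop where
  measurableSet : ∀ R ∈ 𝒬, MeasurableSet R
  nonempty : ∀ R ∈ 𝒬, R.Nonempty
  nested : ∀ R ∈ 𝒬, ∀ R' ∈ 𝒬, (R ∩ R').Nonempty → R ⊆ R' ∨ R' ⊆ R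

lemma IsCubeFamily.mono [MeasurableSpace X] {𝒬' : Set (Set X)} (h𝒬 : IsCubeFamily 𝒬)
    (h : 𝒬' ⊆ 𝒬) : IsCubeFamily 𝒬' where
  measurableSet R hR := h𝒬.measurableSet R (h hR)
  nonempty R hR := h𝒬.nonempty R (h hR)
  nested R hR R' hR' := h𝒬.nested R (h hR) R' (h hR')

/-- The pair `t = (k, P)` consists of a level `k` and a maximal member `P` of `𝒬` among those on
which the weight `a` exceeds `2 ^ k`. -/
def IsMaxCube (𝒬 : Set (Set X)) (a : Set X → ℝ≥0∞) (t : ℤ × Set X) : Prop :=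
  Maximal (fun R => R ∈ 𝒬 ∧ 2 ^ t.1 < a R) t.2

lemma IsMaxCube.mem (ht : IsMaxCube 𝒬 a t) : t.2 ∈ 𝒬 := ht.prop.1

lemma IsMaxCube.lt (ht : IsMaxCube 𝒬 a t) : 2 ^ t.1 < a t.2 := ht.prop.2

lemma IsMaxCube.eq_of_inter_nonempty [MeasurableSpace X] (h𝒬 : IsCubeFamily 𝒬)
    (hs : IsMaxCube 𝒬 a s) (ht : IsMaxCube 𝒬 a t) (level_eq : s.1 = t.1)
    (h : (s.2 ∩ t.2).Nonempty) : s = t := by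
  refine Prod.ext level_eq ?_
  rcases h𝒬.nested _ hs.mem _ ht.mem h with hst | hts
  · exact hs.eq_of_subset ⟨ht.mem, level_eq ▸ ht.lt⟩ hst
  · exact (ht.eq_of_subset ⟨hs.mem, level_eq ▸ hs.lt⟩ hts).symm

/-- The pair `t = (k, P)` is the level of the cube `R`: the largest value of `a` on a member of `𝒬`
containing `R` lies in `(2 ^ k, 2 ^ (k + 1)]`, and `P` is the maximal cube of level `k` above `R`.
-/
structure IsLevel (𝒬 : Set (Set X)) (a : Set X → ℝ≥0∞) (R : Set X) (t : ℤ × Set X) : Prop where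
  mem : R ∈ 𝒬
  isMaxCube : IsMaxCube 𝒬 a t
  subset : R ⊆ t.2
  le : ∀ R' ∈ 𝒬, R ⊆ R' → a R' ≤ 2 ^ (t.1 + 1)

lemma exists_isLevel (h𝒬 : 𝒬.Finite) (ha : ∀ R ∈ 𝒬, a R ≠ ⊤) (hR : R ∈ 𝒬) (hR0 : a R ≠ 0) :
    ∃ t, IsLevel 𝒬 a R t := by
  have finite_above : {R' ∈ 𝒬 | R ⊆ R'}.Finite := h𝒬.subset (sep_subset _ _)
  obtain ⟨R₀, ⟨hR₀, hRR₀⟩, a_le⟩ := exists_max_image _ a finite_above ⟨R, hR, Subset.rfl⟩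
  have hR₀0 : a R₀ ≠ 0 := fun h => hR0 (le_zero_iff.1 (h ▸ a_le R ⟨hR, Subset.rfl⟩))
  obtain ⟨k, hk, hk'⟩ := ENNReal.exists_mem_Ioc_zpow hR₀0 (ha R₀ hR₀) ENNReal.one_lt_two
    ENNReal.ofNat_ne_top
  obtain ⟨P, hR₀P, hP⟩ := (h𝒬.subset fun R' h => h.1 :
    {R' | R' ∈ 𝒬 ∧ (2 : ℝ≥0∞) ^ k < a R'}.Finite).exists_le_maximal ⟨hR₀, hk⟩
  exact ⟨(k, P), hR, hP, hRR₀.trans hR₀P, fun R' hR' h => (a_le R' ⟨hR', h⟩).trans hk'⟩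

end Levels

/-! ### The Carleson embedding -/

section Carleson

variable {X : Type*} [MeasurableSpace X] {μ : Measure X} {f : X → ℝ≥0∞} {p : ℝ}

/-- The average of `f` over `R` with respect to `μ`, which is zero if `μ R` is zero. -/
def cubeAv (μ : Measure X) (f : X → ℝ≥0∞) (R : Set X) : ℝ≥0∞ := ⨍⁻ x in R, f x ∂μ

lemma cubeAv_mul_measure {R : Set X} (hR : μ R ≠ ⊤) : cubeAv μ f R * μ R = ∫⁻ x in R, f x ∂μ := by
  rw [mul_comm, cubeAv, measure_mul_setLAverage f hR]

lemma cubeAv_ne_zero {R : Set X} (hR : μ R ≠ ⊤) (h : ∫⁻ x in R, f x ∂μ ≠ 0) :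
    cubeAv μ f R ≠ 0 := fun h0 => h (by rw [← cubeAv_mul_measure hR, h0, zero_mul])

/-- The contribution `(2 ^ k) ^ p * μ P` of the pair `t = (k, P)` to a Carleson sum. -/
def levelEnergy (μ : Measure X) (p : ℝ) (t : ℤ × Set X) : ℝ≥0∞ := (2 ^ t.1) ^ p * μ t.2

lemma levelEnergy_rpow_one_div (hp : 0 < p) (t : ℤ × Set X) :
    levelEnergy μ p t ^ (1 / p) = 2 ^ t.1 * μ t.2 ^ (1 / p) := by
  rw [levelEnergy, ENNReal.mul_rpow_of_nonneg _ _ (one_div_nonneg.2 hp.le), ← ENNReal.rpow_mul,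
    mul_one_div_cancel hp.ne', ENNReal.rpow_one]

lemma rpow_sub_one_mul_self (hp : 1 < p) (x : ℝ≥0∞) : x ^ (p - 1) * x = x ^ p := by
  conv_lhs => enter [2]; rw [← ENNReal.rpow_one x]
  rw [← ENNReal.rpow_add_of_nonneg _ _ (sub_pos.2 hp).le zero_le_one, sub_add_cancel]

lemma mul_measure_le_setLIntegral_inter_lt (hf : Measurable f) {P : Set X} (hP : μ P ≠ ⊤)
    {c : ℝ≥0∞} (hc : c ≠ ⊤) (h : 2 * c * μ P ≤ ∫⁻ x in P, f x ∂μ) :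
    c * μ P ≤ ∫⁻ x in P ∩ {x | c < f x}, f x ∂μ := by
  have h_small : ∫⁻ x in P \ {x | c < f x}, f x ∂μ ≤ c * μ P := by
    calc ∫⁻ x in P \ {x | c < f x}, f x ∂μ ≤ ∫⁻ _ in P \ {x | c < f x}, c ∂μ :=
          setLIntegral_mono measurable_const fun x hx => not_lt.1 hx.2
      _ ≤ c * μ P := by
          rw [setLIntegral_const]
          gcongr
          exact sdiff_subset
  refine (ENNReal.add_le_add_iff_right (ENNReal.mul_ne_top hc hP)).1 ?_
  calc c * μ P + c * μ P = 2 * c * μ P := by ring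
    _ ≤ ∫⁻ x in P, f x ∂μ := h
    _ = ∫⁻ x in P ∩ {x | c < f x}, f x ∂μ + ∫⁻ x in P \ {x | c < f x}, f x ∂μ :=
        (lintegral_inter_add_sdiff f P (measurableSet_lt measurable_const hf)).symm
    _ ≤ ∫⁻ x in P ∩ {x | c < f x}, f x ∂μ + c * μ P := by gcongr

lemma levelEnergy_le_setLIntegral (hf : Measurable f) (hp : 1 < p) {t : ℤ × Set X} (ht : μ t.2 ≠ ⊤)
    (h : 2 ^ t.1 < cubeAv μ f t.2) :
    levelEnergy μ p t ≤
      2 * ((2 ^ t.1) ^ (p - 1) * ∫⁻ x in t.2 ∩ {x | 2 ^ (t.1 - 1) < f x}, f x ∂μ) := by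
  have h_half : 2 ^ (t.1 - 1) * μ t.2 ≤ ∫⁻ x in t.2 ∩ {x | 2 ^ (t.1 - 1) < f x}, f x ∂μ := by
    refine mul_measure_le_setLIntegral_inter_lt hf ht (two_zpow_ne_top _) ?_
    rw [← two_zpow_eq_two_mul, ← cubeAv_mul_measure ht]
    gcongr
  calc levelEnergy μ p t = (2 ^ t.1) ^ (p - 1) * 2 ^ t.1 * μ t.2 := by
        rw [levelEnergy, rpow_sub_one_mul_self hp]
    _ = 2 * ((2 ^ t.1) ^ (p - 1) * (2 ^ (t.1 - 1) * μ t.2)) := by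
        conv_lhs => enter [1, 2]; rw [two_zpow_eq_two_mul]
        ring
    _ ≤ _ := by gcongr

/-- The constant of the Carleson embedding theorem `sum_levelEnergy_le`. -/
def carlesonConst (p : ℝ) : ℝ≥0∞ := 2 * geomConst (p - 1)

lemma carlesonConst_ne_top (hp : 1 < p) : carlesonConst p ≠ ⊤ :=
  ENNReal.mul_ne_top ENNReal.ofNat_ne_top (geomConst_ne_top (sub_pos.2 hp))

lemma one_le_carlesonConst (hp : 1 < p) : 1 ≤ carlesonConst p :=
  one_le_mul one_le_two (one_le_geomConst (sub_pos.2 hp))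

variable {𝒬 : Set (Set X)}

open Classical in
lemma sum_indicator_two_zpow_rpow_le (hp : 1 < p) (h𝒬 : IsCubeFamily 𝒬) {a : Set X → ℝ≥0∞}
    {K : Finset (ℤ × Set X)} (hK : ∀ t ∈ K, IsMaxCube 𝒬 a t) (x : X) :
    ∑ t ∈ K, (t.2 ∩ {x | 2 ^ (t.1 - 1) < f x}).indicator
      (fun x => (2 ^ t.1) ^ (p - 1) * f x) x ≤ geomConst (p - 1) * f x ^ p := by
  set Kx := K.filter fun t => x ∈ t.2 ∩ {x | 2 ^ (t.1 - 1) < f x}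
  have level_injOn : Set.InjOn Prod.fst (Kx : Set (ℤ × Set X)) := by
    intro s hs t ht level_eq
    obtain ⟨hsK, hxs, -⟩ := Finset.mem_filter.1 hs
    obtain ⟨htK, hxt, -⟩ := Finset.mem_filter.1 ht
    exact (hK s hsK).eq_of_inter_nonempty h𝒬 (hK t htK) level_eq ⟨x, hxs, hxt⟩
  calc ∑ t ∈ K, (t.2 ∩ {x | 2 ^ (t.1 - 1) < f x}).indicator (fun x => (2 ^ t.1) ^ (p - 1) * f x) x
      = (∑ k ∈ Kx.image Prod.fst, (2 ^ k) ^ (p - 1)) * f x := by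
        simp only [Set.indicator_apply]
        rw [← Finset.sum_filter, Finset.sum_image level_injOn, Finset.sum_mul]
    _ ≤ geomConst (p - 1) * f x ^ (p - 1) * f x := by
        gcongr
        refine sum_two_zpow_rpow_le (sub_pos.2 hp) fun k hk => ?_
        obtain ⟨t, ht, rfl⟩ := Finset.mem_image.1 hk
        exact (Finset.mem_filter.1 ht).2.2.le
    _ = geomConst (p - 1) * f x ^ p := by
        rw [mul_assoc, rpow_sub_one_mul_self hp]

/-- The Carleson embedding theorem: as maximal cubes of one level are disjoint, the levels at each
point form a geometric sum. -/
lemma sum_levelEnergy_le (hf : Measurable f) (hp : 1 < p) (h𝒬 : IsCubeFamily 𝒬)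
    (hμ : ∀ R ∈ 𝒬, μ R ≠ ⊤) {K : Finset (ℤ × Set X)} (hK : ∀ t ∈ K, IsMaxCube 𝒬 (cubeAv μ f) t) :
    ∑ t ∈ K, levelEnergy μ p t ≤ carlesonConst p * ∫⁻ x, f x ^ p ∂μ := by
  have measurableSet_inter (t) (ht : t ∈ K) : MeasurableSet (t.2 ∩ {x | 2 ^ (t.1 - 1) < f x}) :=
    (h𝒬.measurableSet _ (hK t ht).mem).inter (measurableSet_lt measurable_const hf)
  calc ∑ t ∈ K, levelEnergy μ p t
      ≤ ∑ t ∈ K, 2 * ∫⁻ x, (t.2 ∩ {x | 2 ^ (t.1 - 1) < f x}).indicator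
          (fun x => (2 ^ t.1) ^ (p - 1) * f x) x ∂μ := by
        refine Finset.sum_le_sum fun t ht => ?_
        rw [lintegral_indicator (measurableSet_inter t ht), lintegral_const_mul _ hf]
        exact levelEnergy_le_setLIntegral hf hp (hμ _ (hK t ht).mem) (hK t ht).lt
    _ = 2 * ∫⁻ x, ∑ t ∈ K, (t.2 ∩ {x | 2 ^ (t.1 - 1) < f x}).indicator
          (fun x => (2 ^ t.1) ^ (p - 1) * f x) x ∂μ := by
        rw [← Finset.mul_sum, lintegral_finsetSum]
        exact fun t ht => (hf.const_mul _).indicator (measurableSet_inter t ht)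
    _ ≤ 2 * ∫⁻ x, geomConst (p - 1) * f x ^ p ∂μ := by
        gcongr with x
        exact sum_indicator_two_zpow_rpow_le hp h𝒬 hK x
    _ = carlesonConst p * ∫⁻ x, f x ^ p ∂μ := by
        rw [lintegral_const_mul _ (hf.pow_const p), carlesonConst, mul_assoc]

end Carleson

/-! ### Testing conditions -/

section Testing

variable {X ι : Type*} {𝒬 𝒟 : Set (Set X)} {A B C : ι → Set X}

/-- `A` picks a child `A q` of each cube `C q`; there is no member of `𝒬` strictly between the two.
-/
structure IsChildMap (𝒬 : Set (Set X)) (A C : ι → Set X) : Prop where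
  injective : Function.Injective A
  ssubset : ∀ q, A q ⊂ C q
  parent_subset : ∀ q, ∀ R ∈ 𝒬, A q ⊂ R → C q ⊆ R

lemma IsChildMap.mono (hA : IsChildMap 𝒟 A C) (h : 𝒬 ⊆ 𝒟) : IsChildMap 𝒬 A C where
  injective := hA.injective
  ssubset := hA.ssubset
  parent_subset q R hR := hA.parent_subset q R (h hR)

lemma IsChildMap.eq_or_parent_subset (hA : IsChildMap 𝒬 A C) {q : ι} {R : Set X} (hR : R ∈ 𝒬)
    (h : A q ⊆ R) : R = A q ∨ C q ⊆ R :=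
  h.eq_or_ssubset.imp Eq.symm (hA.parent_subset q R hR)

lemma IsLevel.eq_of_level_lt {a : Set X → ℝ≥0∞} (hA : ∀ q, A q ⊆ C q)
    (hB : IsChildMap 𝒬 B C) {q : ι} {s t : ℤ × Set X} (hs : IsLevel 𝒬 a (A q) s)
    (ht : IsMaxCube 𝒬 a t) (hst : s.1 < t.1) (hBt : B q ⊆ t.2) : t.2 = B q := by
  refine (hB.eq_or_parent_subset ht.mem hBt).resolve_right fun hCt => ht.lt.not_ge ?_
  calc a t.2 ≤ 2 ^ (s.1 + 1) := hs.le _ ht.mem ((hA q).trans hCt)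
    _ ≤ 2 ^ t.1 := ENNReal.zpow_le_of_le one_le_two (Int.add_one_le_of_lt hst)

/-- In the first two cases the larger of two maximal cubes above the children of `C q` also contains
`C q`. -/
lemma corona_trichotomy [MeasurableSpace X] {a b : Set X → ℝ≥0∞} (h𝒬 : IsCubeFamily 𝒬)
    (hA : IsChildMap 𝒬 A C) (hB : IsChildMap 𝒬 B C) {q : ι} {s t : ℤ × Set X}
    (ht : IsLevel 𝒬 a (A q) t) (hs : IsLevel 𝒬 b (B q) s) :
    (C q ⊆ t.2 ∧ s.2 ⊆ t.2) ∨ (C q ⊆ s.2 ∧ t.2 ⊆ s.2) ∨ (t.2 = A q ∧ s.2 = B q) := by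
  have nonempty_C : (C q).Nonempty := (h𝒬.nonempty _ ht.mem).mono (hA.ssubset q).subset
  rcases hA.eq_or_parent_subset ht.isMaxCube.mem ht.subset with htA | hCt <;>
    rcases hB.eq_or_parent_subset hs.isMaxCube.mem hs.subset with hsB | hCs
  · exact Or.inr (Or.inr ⟨htA, hsB⟩)
  · exact Or.inr (Or.inl ⟨hCs, htA.subset.trans ((hA.ssubset q).subset.trans hCs)⟩)
  · exact Or.inl ⟨hCt, hsB.subset.trans ((hB.ssubset q).subset.trans hCt)⟩
  · have nonempty_inter := nonempty_C.mono (subset_inter hCt hCs)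
    exact (h𝒬.nested _ ht.isMaxCube.mem _ hs.isMaxCube.mem nonempty_inter).elim
      (fun hts => Or.inr (Or.inl ⟨hCs, hts⟩)) fun hst => Or.inl ⟨hCt, hst⟩

variable [MeasurableSpace X] {σ w : Measure X} {lam : ι → ℝ≥0∞} {p p' : ℝ} {N U T T' : ℝ≥0∞}

/-- The estimate `‖Λ‖ ≤ N` for the form `Λ(f, g) = ∑ λ_q (∫_{A q} f dσ) (∫_{B q} g dw)`. -/
def FormBound (σ w : Measure X) (A B : ι → Set X) (lam : ι → ℝ≥0∞) (p p' : ℝ) (N : ℝ≥0∞) : Prop :=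
  ∀ f g : X → ℝ≥0∞, Measurable f → Measurable g →
    ∑' q, lam q * (∫⁻ x in A q, f x ∂σ) * ∫⁻ x in B q, g x ∂w ≤
      N * (∫⁻ x, f x ^ p ∂σ) ^ (1 / p) * (∫⁻ x, g x ^ p' ∂w) ^ (1 / p')

/-- The estimate `𝒰 ≤ U`. -/
def PairBound (σ w : Measure X) (A B : ι → Set X) (lam : ι → ℝ≥0∞) (p p' : ℝ) (U : ℝ≥0∞) : Prop :=
  ∀ q, lam q * σ (A q) ^ (1 / p') * w (B q) ^ (1 / p) ≤ U

/-- The estimate `𝒯 ≤ T` for the form tested on the cubes of `𝒬`. The dual condition `𝒯* ≤ T` is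
`TestingBound 𝒬 w σ B A C lam p' p T`. -/
def TestingBound (𝒬 : Set (Set X)) (σ w : Measure X) (A B C : ι → Set X) (lam : ι → ℝ≥0∞)
    (p p' : ℝ) (T : ℝ≥0∞) : Prop :=
  ∀ P ∈ 𝒬, ∀ g : X → ℝ≥0∞, Measurable g →
    ∑' q, {q | C q ⊆ P}.indicator (fun q => lam q * σ (A q) * ∫⁻ x in B q, g x ∂w) q ≤
      T * σ P ^ (1 / p) * (∫⁻ x, g x ^ p' ∂w) ^ (1 / p')

lemma FormBound.symm (h : FormBound σ w A B lam p p' N) : FormBound w σ B A lam p' p N := by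
  intro g f hg hf
  simpa only [mul_right_comm] using h f g hf hg

lemma TestingBound.mono (h : TestingBound 𝒟 σ w A B C lam p p' T) (h𝒬 : 𝒬 ⊆ 𝒟) :
    TestingBound 𝒬 σ w A B C lam p p' T :=
  fun P hP => h P (h𝒬 hP)

lemma TestingBound.sum_le (h : TestingBound 𝒬 σ w A B C lam p p' T) {P : Set X} (hP : P ∈ 𝒬)
    {g : X → ℝ≥0∞} (hg : Measurable g) {J : Finset ι} (hJ : ∀ q ∈ J, C q ⊆ P) :
    ∑ q ∈ J, lam q * σ (A q) * ∫⁻ x in B q, g x ∂w ≤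
      T * σ P ^ (1 / p) * (∫⁻ x, g x ^ p' ∂w) ^ (1 / p') := by
  refine le_trans (le_of_eq ?_) ((ENNReal.sum_le_tsum J).trans (h P hP g hg))
  refine Finset.sum_congr rfl fun q hq => ?_
  rw [indicator_of_mem (show q ∈ {q | C q ⊆ P} from hJ q hq)]

lemma lintegral_indicator_one_rpow (hp : 0 < p) {R : Set X} (hR : MeasurableSet R) :
    ∫⁻ x, R.indicator 1 x ^ p ∂σ = σ R := by
  have rpow_eq (x) : R.indicator (1 : X → ℝ≥0∞) x ^ p = R.indicator 1 x := by
    by_cases hx : x ∈ R <;> simp [hx, hp]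
  rw [lintegral_congr rpow_eq, lintegral_indicator_one hR]

lemma setLIntegral_indicator_one_of_subset {R P : Set X} (hP : MeasurableSet P) (h : R ⊆ P) :
    ∫⁻ x in R, P.indicator 1 x ∂σ = σ R := by
  rw [lintegral_indicator_one hP, Measure.restrict_apply hP, inter_eq_self_of_subset_right h]

lemma FormBound.testingBound (h : FormBound σ w A B lam p p' N) (hp : 0 < p)
    (h𝒬 : ∀ R ∈ 𝒬, MeasurableSet R) (hAC : ∀ q, A q ⊆ C q) :
    TestingBound 𝒬 σ w A B C lam p p' N := by
  intro P hP g hg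
  have hPm := h𝒬 P hP
  rw [← lintegral_indicator_one_rpow (σ := σ) hp hPm]
  refine le_trans (ENNReal.tsum_le_tsum fun q => ?_) (h _ g (measurable_one.indicator hPm) hg)
  refine indicator_apply_le' (fun hq => ?_) fun _ => zero_le
  rw [setLIntegral_indicator_one_of_subset hPm ((hAC q).trans hq)]

lemma rpow_one_div_mul_rpow_one_div (hpp : p.HolderConjugate p') (s : ℝ≥0∞) :
    s ^ (1 / p) * s ^ (1 / p') = s := by
  rw [← ENNReal.rpow_add_of_nonneg _ _ hpp.one_div_nonneg hpp.symm.one_div_nonneg,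
    hpp.one_div_add_one_div, one_div_one, ENNReal.rpow_one]

lemma mul_rpow_mul_rpow_le_of_mul_le (hpp : p.HolderConjugate p') {l s t : ℝ≥0∞} (hs : s ≠ ⊤)
    (ht : t ≠ ⊤) (h : l * s * t ≤ N * s ^ (1 / p) * t ^ (1 / p')) :
    l * s ^ (1 / p') * t ^ (1 / p) ≤ N := by
  rcases eq_or_ne s 0 with rfl | hs0
  · simp [hpp.symm.pos]
  rcases eq_or_ne t 0 with rfl | ht0
  · simp [hpp.pos]
  have factor_ne_zero : s ^ (1 / p) * t ^ (1 / p') ≠ 0 :=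
    mul_ne_zero (ENNReal.rpow_pos hs0.bot_lt hs).ne' (ENNReal.rpow_pos ht0.bot_lt ht).ne'
  have factor_ne_top : s ^ (1 / p) * t ^ (1 / p') ≠ ⊤ :=
    ENNReal.mul_ne_top (ENNReal.rpow_ne_top_of_nonneg hpp.one_div_nonneg hs)
      (ENNReal.rpow_ne_top_of_nonneg hpp.symm.one_div_nonneg ht)
  rw [← ENNReal.mul_le_mul_iff_left factor_ne_zero factor_ne_top]
  calc l * s ^ (1 / p') * t ^ (1 / p) * (s ^ (1 / p) * t ^ (1 / p'))
      = l * (s ^ (1 / p) * s ^ (1 / p')) * (t ^ (1 / p) * t ^ (1 / p')) := by ring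
    _ = l * s * t := by simp only [rpow_one_div_mul_rpow_one_div hpp]
    _ ≤ N * (s ^ (1 / p) * t ^ (1 / p')) := by rwa [← mul_assoc]

lemma FormBound.pairBound (h : FormBound σ w A B lam p p' N) (hpp : p.HolderConjugate p')
    (hA : ∀ q, MeasurableSet (A q)) (hB : ∀ q, MeasurableSet (B q)) (hσ : ∀ q, σ (A q) ≠ ⊤)
    (hw : ∀ q, w (B q) ≠ ⊤) : PairBound σ w A B lam p p' N := by
  intro q
  have h_ind := (ENNReal.le_tsum q).trans (h _ _ (measurable_one.indicator (hA q))
    (measurable_one.indicator (hB q)))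
  rw [setLIntegral_indicator_one_of_subset (hA q) Subset.rfl,
    setLIntegral_indicator_one_of_subset (hB q) Subset.rfl,
    lintegral_indicator_one_rpow hpp.pos (hA q),
    lintegral_indicator_one_rpow hpp.symm.pos (hB q)] at h_ind
  exact mul_rpow_mul_rpow_le_of_mul_le hpp (hσ q) (hw q) h_ind

end Testing
/-! ### Sufficiency of the testing conditions -/

section Sufficiency

variable {X ι : Type*} [MeasurableSpace X] {𝒬 𝒟 : Set (Set X)} {A B C : ι → Set X}
  {σ w : Measure X} {lam : ι → ℝ≥0∞} {p p' : ℝ} {U T T' : ℝ≥0∞} {f g : X → ℝ≥0∞}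

lemma IsLevel.setLIntegral_le {R : Set X} {t : ℤ × Set X} (h : IsLevel 𝒬 (cubeAv σ f) R t)
    (hR : σ R ≠ ⊤) : ∫⁻ x in R, f x ∂σ ≤ 2 * (2 ^ t.1 * σ R) := by
  rw [← cubeAv_mul_measure hR, ← mul_assoc]
  gcongr
  simpa [two_zpow_eq_two_mul (t.1 + 1)] using h.le R h.mem Subset.rfl

lemma sum_rpow_mul_rpow_le (hpp : p.HolderConjugate p') {κ : Type*} (K : Finset κ)
    (x y : κ → ℝ≥0∞) :
    ∑ t ∈ K, x t ^ (1 / p) * y t ^ (1 / p') ≤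
      (∑ t ∈ K, x t) ^ (1 / p) * (∑ t ∈ K, y t) ^ (1 / p') := by
  simpa only [one_div, ENNReal.rpow_inv_rpow hpp.ne_zero, ENNReal.rpow_inv_rpow hpp.symm.ne_zero]
    using ENNReal.inner_le_Lp_mul_Lq K (fun t => x t ^ (1 / p)) (fun t => y t ^ (1 / p')) hpp

/-- The `ℓ^p` norm of the functions `2 ^ k * 1_P` over the pairs `(k, P)` in `S`. It replaces a
function whose averages over cubes `R ⊆ P` are controlled by the levels `2 ^ k`. -/
def levelMajorant (p : ℝ) (S : Finset (ℤ × Set X)) (x : X) : ℝ≥0∞ :=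
  (∑ s ∈ S, s.2.indicator (fun _ => (2 ^ s.1) ^ p) x) ^ (1 / p)

variable {S : Finset (ℤ × Set X)}

lemma measurable_levelMajorant (hS : ∀ s ∈ S, MeasurableSet s.2) :
    Measurable (levelMajorant p S) :=
  (Finset.measurable_sum S fun s hs => measurable_const.indicator (hS s hs)).pow_const _

omit [MeasurableSpace X] in
lemma two_zpow_le_levelMajorant (hp : 0 < p) {s : ℤ × Set X} (hs : s ∈ S) {x : X} (hx : x ∈ s.2) :
    2 ^ s.1 ≤ levelMajorant p S x := by
  rw [levelMajorant, one_div, ENNReal.le_rpow_inv_iff hp]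
  calc ((2 : ℝ≥0∞) ^ s.1) ^ p = s.2.indicator (fun _ => (2 ^ s.1) ^ p) x :=
        (indicator_of_mem hx fun _ => _).symm
    _ ≤ _ := Finset.single_le_sum
        (f := fun s : ℤ × Set X => s.2.indicator (fun _ => (2 ^ s.1) ^ p) x) (fun _ _ => zero_le) hs

lemma lintegral_levelMajorant_rpow (hp : 0 < p) (hS : ∀ s ∈ S, MeasurableSet s.2) :
    ∫⁻ x, levelMajorant p S x ^ p ∂w = ∑ s ∈ S, levelEnergy w p s := by
  simp only [levelMajorant, one_div, ENNReal.rpow_inv_rpow hp.ne']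
  rw [lintegral_finsetSum _ fun s hs => measurable_const.indicator (hS s hs)]
  refine Finset.sum_congr rfl fun s hs => ?_
  rw [lintegral_indicator (hS s hs), setLIntegral_const, levelEnergy]

lemma IsLevel.setLIntegral_le_levelMajorant {R : Set X} {s : ℤ × Set X}
    (h : IsLevel 𝒬 (cubeAv w g) R s) (hR : w R ≠ ⊤) (hp : 0 < p)
    (hS : ∀ s ∈ S, MeasurableSet s.2) (hs : s ∈ S) :
    ∫⁻ x in R, g x ∂w ≤ 2 * ∫⁻ x in R, levelMajorant p S x ∂w := by
  refine (h.setLIntegral_le hR).trans ?_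
  gcongr
  rw [← setLIntegral_const]
  exact setLIntegral_mono (measurable_levelMajorant hS) fun x hx =>
    two_zpow_le_levelMajorant hp hs (h.subset hx)

variable {F G : ι → ℤ × Set X} {I : Finset ι}

open Classical in
lemma sum_single_corona_le (hpp : p.HolderConjugate p') (h𝒬 : IsCubeFamily 𝒬)
    (hσ : ∀ R ∈ 𝒬, σ R ≠ ⊤) (hw : ∀ R ∈ 𝒬, w R ≠ ⊤) (hT : TestingBound 𝒬 σ w A B C lam p p' T)
    {t : ℤ × Set X} (ht : t.2 ∈ 𝒬) (hF : ∀ q ∈ I, IsLevel 𝒬 (cubeAv σ f) (A q) t)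
    (hG : ∀ q ∈ I, IsLevel 𝒬 (cubeAv w g) (B q) (G q)) (hC : ∀ q ∈ I, C q ⊆ t.2) :
    ∑ q ∈ I, lam q * (∫⁻ x in A q, f x ∂σ) * ∫⁻ x in B q, g x ∂w ≤
      4 * T * (levelEnergy σ p t ^ (1 / p) *
        (∑ s ∈ I.image G, levelEnergy w p' s) ^ (1 / p')) := by
  have hS : ∀ s ∈ I.image G, MeasurableSet s.2 := by
    simp only [Finset.forall_mem_image]
    exact fun q hq => h𝒬.measurableSet _ (hG q hq).isMaxCube.mem
  set h := levelMajorant p' (I.image G)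
  calc ∑ q ∈ I, lam q * (∫⁻ x in A q, f x ∂σ) * ∫⁻ x in B q, g x ∂w
      ≤ ∑ q ∈ I, lam q * (2 * (2 ^ t.1 * σ (A q))) * (2 * ∫⁻ x in B q, h x ∂w) := by
        gcongr with q hq
        · exact (hF q hq).setLIntegral_le (hσ _ (hF q hq).mem)
        · exact (hG q hq).setLIntegral_le_levelMajorant (hw _ (hG q hq).mem) hpp.symm.pos hS
            (Finset.mem_image_of_mem G hq)
    _ = 4 * 2 ^ t.1 * ∑ q ∈ I, lam q * σ (A q) * ∫⁻ x in B q, h x ∂w := by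
        rw [Finset.mul_sum]
        exact Finset.sum_congr rfl fun q _ => by ring
    _ ≤ 4 * 2 ^ t.1 * (T * σ t.2 ^ (1 / p) * (∫⁻ x, h x ^ p' ∂w) ^ (1 / p')) := by
        gcongr
        exact hT.sum_le ht (measurable_levelMajorant hS) hC
    _ = _ := by
        rw [lintegral_levelMajorant_rpow hpp.symm.pos hS, levelEnergy_rpow_one_div hpp.pos]
        ring

/-- A pair `s` belongs to at most two coronas, as those with the same truth value of `t.2 = s.2`
coincide. -/
lemma level_eq_of_common_level {a b : Set X → ℝ≥0∞} (h𝒬 : IsCubeFamily 𝒬)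
    (hA : ∀ q, A q ⊆ C q) (hB : IsChildMap 𝒬 B C) (hF : ∀ q ∈ I, IsLevel 𝒬 a (A q) (F q))
    (hG : ∀ q ∈ I, IsLevel 𝒬 b (B q) (G q)) (hCF : ∀ q ∈ I, C q ⊆ (F q).2)
    (hGF : ∀ q ∈ I, (G q).2 ⊆ (F q).2) {q q' : ι} (hq : q ∈ I) (hq' : q' ∈ I) (hGq : G q = G q')
    (h : (F q).2 = (G q).2 ↔ (F q').2 = (G q).2) : F q = F q' := by
  wlog hle : (F q).1 ≤ (F q').1 generalizing q q'
  · exact (this hq' hq hGq.symm (hGq ▸ h.symm) (le_of_not_ge hle)).symm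
  have hGF' : (G q).2 ⊆ (F q').2 := hGq ▸ hGF q' hq'
  rcases hle.eq_or_lt with heq | hlt
  · have hne := h𝒬.nonempty _ (hG q hq).isMaxCube.mem
    exact (hF q hq).isMaxCube.eq_of_inter_nonempty h𝒬 (hF q' hq').isMaxCube heq
      (hne.mono (subset_inter (hGF q hq) hGF'))
  · have hBF' : (F q').2 = B q :=
      (hF q hq).eq_of_level_lt hA hB (hF q' hq').isMaxCube hlt ((hG q hq).subset.trans hGF')
    have hFG' : (F q').2 = (G q).2 := (hBF'.subset.trans (hG q hq).subset).antisymm hGF'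
    have hFG : (F q).2 ⊆ B q := ((h.2 hFG').trans (hFG'.symm.trans hBF')).subset
    exact absurd ((hCF q hq).trans hFG) (hB.ssubset q).not_subset

open Classical in
lemma sum_sum_image_le_two_mul {b : ℤ × Set X → ℝ≥0∞} {u v : Set X → ℝ≥0∞} (h𝒬 : IsCubeFamily 𝒬)
    (hA : ∀ q, A q ⊆ C q) (hB : IsChildMap 𝒬 B C) (hF : ∀ q ∈ I, IsLevel 𝒬 u (A q) (F q))
    (hG : ∀ q ∈ I, IsLevel 𝒬 v (B q) (G q)) (hCF : ∀ q ∈ I, C q ⊆ (F q).2)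
    (hGF : ∀ q ∈ I, (G q).2 ⊆ (F q).2) :
    ∑ t ∈ I.image F, ∑ s ∈ (I.filter fun q => F q = t).image G, b s ≤
      2 * ∑ s ∈ I.image G, b s := by
  have card_le_two (s) : ((I.filter fun q => G q = s).image F).card ≤ 2 := by
    refine Finset.card_le_card_of_injOn (t := (Finset.univ : Finset Bool))
      (fun t => decide (t.2 = s.2)) (fun _ _ => Finset.mem_univ _) ?_
    simp only [Set.InjOn, Finset.coe_image, Set.forall_mem_image, Finset.mem_coe,
      Finset.mem_filter, decide_eq_decide]
    rintro q ⟨hq, rfl⟩ q' ⟨hq', hGq⟩ h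
    exact level_eq_of_common_level h𝒬 hA hB hF hG hCF hGF hq hq' hGq.symm h
  calc ∑ t ∈ I.image F, ∑ s ∈ (I.filter fun q => F q = t).image G, b s
      = ∑ s ∈ I.image G, ∑ _t ∈ (I.filter fun q => G q = s).image F, b s := by
        refine Finset.sum_comm' fun _ s => ?_
        simp only [Finset.mem_image, Finset.mem_filter]
        constructor
        · rintro ⟨-, q, ⟨hq, rfl⟩, rfl⟩
          exact ⟨⟨q, ⟨hq, rfl⟩, rfl⟩, q, hq, rfl⟩
        · rintro ⟨⟨q, ⟨hq, rfl⟩, rfl⟩, -⟩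
          exact ⟨⟨q, hq, rfl⟩, q, ⟨hq, rfl⟩, rfl⟩
    _ ≤ ∑ s ∈ I.image G, 2 * b s := by
        gcongr with s
        rw [Finset.sum_const, nsmul_eq_mul]
        gcongr
        exact_mod_cast card_le_two s
    _ = 2 * ∑ s ∈ I.image G, b s := (Finset.mul_sum _ _ _).symm

lemma two_mul_rpow_one_div_le (hp : 1 ≤ p) (x : ℝ≥0∞) : (2 * x) ^ (1 / p) ≤ 2 * x ^ (1 / p) := by
  have hp0 : 0 < p := zero_lt_one.trans_le hp
  rw [ENNReal.mul_rpow_of_nonneg 2 _ (one_div_nonneg.2 hp0.le)]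
  gcongr
  exact (ENNReal.rpow_le_rpow_of_exponent_le one_le_two
    ((div_le_one hp0).2 hp)).trans_eq (ENNReal.rpow_one 2)

open Classical in
lemma sum_corona_le (hpp : p.HolderConjugate p') (h𝒬 : IsCubeFamily 𝒬)
    (hσ : ∀ R ∈ 𝒬, σ R ≠ ⊤) (hw : ∀ R ∈ 𝒬, w R ≠ ⊤) (hA : ∀ q, A q ⊆ C q)
    (hB : IsChildMap 𝒬 B C) (hT : TestingBound 𝒬 σ w A B C lam p p' T)
    (hf : Measurable f) (hg : Measurable g)
    (hF : ∀ q ∈ I, IsLevel 𝒬 (cubeAv σ f) (A q) (F q))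
    (hG : ∀ q ∈ I, IsLevel 𝒬 (cubeAv w g) (B q) (G q))
    (hCF : ∀ q ∈ I, C q ⊆ (F q).2) (hGF : ∀ q ∈ I, (G q).2 ⊆ (F q).2) :
    ∑ q ∈ I, lam q * (∫⁻ x in A q, f x ∂σ) * ∫⁻ x in B q, g x ∂w ≤
      8 * T * ((carlesonConst p * ∫⁻ x, f x ^ p ∂σ) ^ (1 / p) *
        (carlesonConst p' * ∫⁻ x, g x ^ p' ∂w) ^ (1 / p')) := by
  have isMaxCube_F : ∀ t ∈ I.image F, IsMaxCube 𝒬 (cubeAv σ f) t :=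
    Finset.forall_mem_image.2 fun q hq => (hF q hq).isMaxCube
  have isMaxCube_G : ∀ s ∈ I.image G, IsMaxCube 𝒬 (cubeAv w g) s :=
    Finset.forall_mem_image.2 fun q hq => (hG q hq).isMaxCube
  calc ∑ q ∈ I, lam q * (∫⁻ x in A q, f x ∂σ) * ∫⁻ x in B q, g x ∂w
      = ∑ t ∈ I.image F, ∑ q ∈ I.filter fun q => F q = t,
          lam q * (∫⁻ x in A q, f x ∂σ) * ∫⁻ x in B q, g x ∂w :=
        (Finset.sum_fiberwise_of_maps_to (fun q hq => Finset.mem_image_of_mem F hq) _).symm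
    _ ≤ ∑ t ∈ I.image F, 4 * T * (levelEnergy σ p t ^ (1 / p) *
          (∑ s ∈ (I.filter fun q => F q = t).image G, levelEnergy w p' s) ^ (1 / p')) := by
        refine Finset.sum_le_sum fun t ht => ?_
        refine sum_single_corona_le hpp h𝒬 hσ hw hT (isMaxCube_F t ht).mem ?_ ?_ ?_ <;>
          simp only [Finset.mem_filter, and_imp]
        · rintro q hq rfl
          exact hF q hq
        · exact fun q hq _ => hG q hq
        · rintro q hq rfl
          exact hCF q hq
    _ ≤ 4 * T * ((∑ t ∈ I.image F, levelEnergy σ p t) ^ (1 / p) *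
          (∑ t ∈ I.image F, ∑ s ∈ (I.filter fun q => F q = t).image G,
            levelEnergy w p' s) ^ (1 / p')) := by
        rw [← Finset.mul_sum]
        gcongr
        exact sum_rpow_mul_rpow_le hpp _ _ _
    _ ≤ 4 * T * ((carlesonConst p * ∫⁻ x, f x ^ p ∂σ) ^ (1 / p) *
          (2 * (carlesonConst p' * ∫⁻ x, g x ^ p' ∂w)) ^ (1 / p')) := by
        gcongr 4 * T * (?_ ^ (1 / p) * ?_ ^ (1 / p'))
        · exact hpp.one_div_nonneg
        · exact sum_levelEnergy_le hf hpp.lt h𝒬 hσ isMaxCube_F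
        · exact hpp.symm.one_div_nonneg
        · refine (sum_sum_image_le_two_mul h𝒬 hA hB hF hG hCF hGF).trans ?_
          gcongr
          exact sum_levelEnergy_le hg hpp.symm.lt h𝒬 hw isMaxCube_G
    _ ≤ 4 * T * ((carlesonConst p * ∫⁻ x, f x ^ p ∂σ) ^ (1 / p) *
          (2 * (carlesonConst p' * ∫⁻ x, g x ^ p' ∂w) ^ (1 / p'))) := by
        gcongr
        exact two_mul_rpow_one_div_le hpp.symm.lt.le _
    _ = _ := by ring

open Classical in
lemma sum_levelEnergy_le_of_snd_eq (hp : 1 < p) (h𝒬 : IsCubeFamily 𝒬) (hσ : ∀ R ∈ 𝒬, σ R ≠ ⊤)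
    (hA : Function.Injective A) (hf : Measurable f)
    (hF : ∀ q ∈ I, IsLevel 𝒬 (cubeAv σ f) (A q) (F q)) (hFA : ∀ q ∈ I, (F q).2 = A q) :
    ∑ q ∈ I, levelEnergy σ p (F q) ≤ carlesonConst p * ∫⁻ x, f x ^ p ∂σ := by
  have injOn : Set.InjOn F I := fun q hq q' hq' h =>
    hA (by rw [← hFA q hq, ← hFA q' hq', h])
  rw [← Finset.sum_image injOn]
  exact sum_levelEnergy_le hf hp h𝒬 hσ (Finset.forall_mem_image.2 fun q hq => (hF q hq).isMaxCube)

lemma sum_diagonal_le (hpp : p.HolderConjugate p') (h𝒬 : IsCubeFamily 𝒬)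
    (hσ : ∀ R ∈ 𝒬, σ R ≠ ⊤) (hw : ∀ R ∈ 𝒬, w R ≠ ⊤) (hA : Function.Injective A)
    (hB : Function.Injective B) (hU : PairBound σ w A B lam p p' U)
    (hf : Measurable f) (hg : Measurable g)
    (hF : ∀ q ∈ I, IsLevel 𝒬 (cubeAv σ f) (A q) (F q))
    (hG : ∀ q ∈ I, IsLevel 𝒬 (cubeAv w g) (B q) (G q))
    (hFA : ∀ q ∈ I, (F q).2 = A q) (hGB : ∀ q ∈ I, (G q).2 = B q) :
    ∑ q ∈ I, lam q * (∫⁻ x in A q, f x ∂σ) * ∫⁻ x in B q, g x ∂w ≤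
      4 * U * ((carlesonConst p * ∫⁻ x, f x ^ p ∂σ) ^ (1 / p) *
        (carlesonConst p' * ∫⁻ x, g x ^ p' ∂w) ^ (1 / p')) := by
  have term_le : ∀ q ∈ I, lam q * (∫⁻ x in A q, f x ∂σ) * ∫⁻ x in B q, g x ∂w ≤
      4 * U * (levelEnergy σ p (F q) ^ (1 / p) * levelEnergy w p' (G q) ^ (1 / p')) := by
    intro q hq
    calc lam q * (∫⁻ x in A q, f x ∂σ) * ∫⁻ x in B q, g x ∂w
        ≤ lam q * (2 * (2 ^ (F q).1 * σ (A q))) * (2 * (2 ^ (G q).1 * w (B q))) := by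
          gcongr
          · exact (hF q hq).setLIntegral_le (hσ _ (hF q hq).mem)
          · exact (hG q hq).setLIntegral_le (hw _ (hG q hq).mem)
      _ = 4 * (lam q * σ (A q) ^ (1 / p') * w (B q) ^ (1 / p)) *
            ((2 ^ (F q).1 * σ (A q) ^ (1 / p)) * (2 ^ (G q).1 * w (B q) ^ (1 / p'))) := by
          conv_lhs => rw [← rpow_one_div_mul_rpow_one_div hpp (σ (A q)),
            ← rpow_one_div_mul_rpow_one_div hpp (w (B q))]
          ring
      _ ≤ _ := by
          rw [levelEnergy_rpow_one_div hpp.pos, levelEnergy_rpow_one_div hpp.symm.pos, hFA q hq,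
            hGB q hq]
          gcongr
          exact hU q
  calc ∑ q ∈ I, lam q * (∫⁻ x in A q, f x ∂σ) * ∫⁻ x in B q, g x ∂w
      ≤ 4 * U * ∑ q ∈ I, levelEnergy σ p (F q) ^ (1 / p) * levelEnergy w p' (G q) ^ (1 / p') := by
        rw [Finset.mul_sum]
        exact Finset.sum_le_sum term_le
    _ ≤ 4 * U * ((∑ q ∈ I, levelEnergy σ p (F q)) ^ (1 / p) *
          (∑ q ∈ I, levelEnergy w p' (G q)) ^ (1 / p')) := by
        gcongr
        exact sum_rpow_mul_rpow_le hpp _ _ _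
    _ ≤ _ := by
        gcongr 4 * U * (?_ ^ (1 / p) * ?_ ^ (1 / p'))
        · exact hpp.one_div_nonneg
        · exact sum_levelEnergy_le_of_snd_eq hpp.lt h𝒬 hσ hA hf hF hFA
        · exact hpp.symm.one_div_nonneg
        · exact sum_levelEnergy_le_of_snd_eq hpp.symm.lt h𝒬 hw hB hg hG hGB

open Classical in
lemma sum_le_of_isLevel (hpp : p.HolderConjugate p') (h𝒬 : IsCubeFamily 𝒬)
    (hσ : ∀ R ∈ 𝒬, σ R ≠ ⊤) (hw : ∀ R ∈ 𝒬, w R ≠ ⊤) (hA : IsChildMap 𝒬 A C)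
    (hB : IsChildMap 𝒬 B C) (hU : PairBound σ w A B lam p p' U)
    (hT : TestingBound 𝒬 σ w A B C lam p p' T) (hT' : TestingBound 𝒬 w σ B A C lam p' p T')
    (hf : Measurable f) (hg : Measurable g)
    (hF : ∀ q ∈ I, IsLevel 𝒬 (cubeAv σ f) (A q) (F q))
    (hG : ∀ q ∈ I, IsLevel 𝒬 (cubeAv w g) (B q) (G q)) :
    ∑ q ∈ I, lam q * (∫⁻ x in A q, f x ∂σ) * ∫⁻ x in B q, g x ∂w ≤
      8 * (U + T + T') * ((carlesonConst p * ∫⁻ x, f x ^ p ∂σ) ^ (1 / p) *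
        (carlesonConst p' * ∫⁻ x, g x ^ p' ∂w) ^ (1 / p')) := by
  set φ : ι → ℝ≥0∞ := fun q => lam q * (∫⁻ x in A q, f x ∂σ) * ∫⁻ x in B q, g x ∂w
  set x := (carlesonConst p * ∫⁻ x, f x ^ p ∂σ) ^ (1 / p)
  set y := (carlesonConst p' * ∫⁻ x, g x ^ p' ∂w) ^ (1 / p')
  set If := I.filter fun q => C q ⊆ (F q).2 ∧ (G q).2 ⊆ (F q).2
  set Ig := I.filter fun q => C q ⊆ (G q).2 ∧ (F q).2 ⊆ (G q).2
  set Id := I.filter fun q => (F q).2 = A q ∧ (G q).2 = B q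
  have sum_If : ∑ q ∈ If, φ q ≤ 8 * T * (x * y) :=
    sum_corona_le hpp h𝒬 hσ hw (fun q => (hA.ssubset q).subset) hB hT hf hg
      (fun q hq => hF q (Finset.mem_filter.1 hq).1) (fun q hq => hG q (Finset.mem_filter.1 hq).1)
      (fun q hq => (Finset.mem_filter.1 hq).2.1) fun q hq => (Finset.mem_filter.1 hq).2.2
  have sum_Ig : ∑ q ∈ Ig, φ q ≤ 8 * T' * (y * x) :=
    (Finset.sum_congr rfl fun q _ => mul_right_comm _ _ _).trans_le <|
      sum_corona_le hpp.symm h𝒬 hw hσ (fun q => (hB.ssubset q).subset) hA hT' hg hf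
        (fun q hq => hG q (Finset.mem_filter.1 hq).1) (fun q hq => hF q (Finset.mem_filter.1 hq).1)
        (fun q hq => (Finset.mem_filter.1 hq).2.1) fun q hq => (Finset.mem_filter.1 hq).2.2
  have sum_Id : ∑ q ∈ Id, φ q ≤ 4 * U * (x * y) :=
    sum_diagonal_le hpp h𝒬 hσ hw hA.injective hB.injective hU hf hg
      (fun q hq => hF q (Finset.mem_filter.1 hq).1) (fun q hq => hG q (Finset.mem_filter.1 hq).1)
      (fun q hq => (Finset.mem_filter.1 hq).2.1) fun q hq => (Finset.mem_filter.1 hq).2.2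
  have sum_union_le (J J' : Finset ι) : ∑ q ∈ J ∪ J', φ q ≤ ∑ q ∈ J, φ q + ∑ q ∈ J', φ q := by
    rw [← Finset.sum_union_inter]
    exact le_self_add
  have I_subset : I ⊆ If ∪ Ig ∪ Id := fun q hq => by
    have := corona_trichotomy h𝒬 hA hB (hF q hq) (hG q hq)
    simp only [Finset.mem_union, Finset.mem_filter, If, Ig, Id]
    tauto
  calc ∑ q ∈ I, φ q ≤ ∑ q ∈ If ∪ Ig ∪ Id, φ q := Finset.sum_le_sum_of_subset I_subset
    _ ≤ ∑ q ∈ If, φ q + ∑ q ∈ Ig, φ q + ∑ q ∈ Id, φ q :=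
        (sum_union_le _ _).trans (by gcongr; exact sum_union_le _ _)
    _ ≤ 8 * T * (x * y) + 8 * T' * (y * x) + 8 * U * (x * y) := by
        gcongr
        exact sum_Id.trans (by gcongr; norm_num)
    _ = 8 * (U + T + T') * (x * y) := by ring

lemma setLIntegral_le_rpow_mul (hpp : p.HolderConjugate p') (hf : Measurable f) (R : Set X) :
    ∫⁻ x in R, f x ∂σ ≤ (∫⁻ x, f x ^ p ∂σ) ^ (1 / p) * σ R ^ (1 / p') := by
  have holder := ENNReal.lintegral_mul_le_Lp_mul_Lq (σ.restrict R) hpp hf.aemeasurable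
    aemeasurable_one
  simp only [Pi.mul_apply, mul_one, ENNReal.one_rpow, setLIntegral_one] at holder
  refine holder.trans ?_
  gcongr
  · exact hpp.one_div_nonneg
  · exact Measure.restrict_le_self

lemma rpow_ne_zero_of_setLIntegral_ne_zero (hpp : p.HolderConjugate p') (hf : Measurable f)
    {R : Set X} (h : ∫⁻ x in R, f x ∂σ ≠ 0) :
    (∫⁻ x, f x ^ p ∂σ) ^ (1 / p) ≠ 0 ∧ σ R ^ (1 / p') ≠ 0 :=
  mul_ne_zero_iff.1 (ne_bot_of_le_ne_bot h (setLIntegral_le_rpow_mul hpp hf R))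

lemma cubeAv_ne_top (hpp : p.HolderConjugate p') (hf : Measurable f) (hfp : ∫⁻ x, f x ^ p ∂σ ≠ ⊤)
    {R : Set X} (hR : σ R ≠ ⊤) : cubeAv σ f R ≠ ⊤ := by
  rw [cubeAv, setLAverage_eq]
  rcases eq_or_ne (σ R) 0 with hR0 | hR0
  · simp [setLIntegral_measure_zero _ _ hR0]
  · refine ENNReal.div_ne_top (ne_top_of_le_ne_top ?_ (setLIntegral_le_rpow_mul hpp hf R)) hR0
    exact ENNReal.mul_ne_top (ENNReal.rpow_ne_top_of_nonneg hpp.one_div_nonneg hfp)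
      (ENNReal.rpow_ne_top_of_nonneg hpp.symm.one_div_nonneg hR)

open Classical in
lemma sum_le_of_testingBound (hpp : p.HolderConjugate p') (h𝒟 : IsCubeFamily 𝒟)
    (hσ : ∀ R ∈ 𝒟, σ R ≠ ⊤) (hw : ∀ R ∈ 𝒟, w R ≠ ⊤) (hA𝒟 : ∀ q, A q ∈ 𝒟) (hB𝒟 : ∀ q, B q ∈ 𝒟)
    (hA : IsChildMap 𝒟 A C) (hB : IsChildMap 𝒟 B C) (hU : PairBound σ w A B lam p p' U)
    (hT : TestingBound 𝒟 σ w A B C lam p p' T) (hT' : TestingBound 𝒟 w σ B A C lam p' p T')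
    (hf : Measurable f) (hg : Measurable g) (hfp : ∫⁻ x, f x ^ p ∂σ ≠ ⊤)
    (hgp : ∫⁻ x, g x ^ p' ∂w ≠ ⊤) (J : Finset ι) :
    ∑ q ∈ J, lam q * (∫⁻ x in A q, f x ∂σ) * ∫⁻ x in B q, g x ∂w ≤
      8 * (U + T + T') * ((carlesonConst p * ∫⁻ x, f x ^ p ∂σ) ^ (1 / p) *
        (carlesonConst p' * ∫⁻ x, g x ^ p' ∂w) ^ (1 / p')) := by
  set 𝒬 : Set (Set X) := A '' J ∪ B '' J
  have finite_𝒬 : 𝒬.Finite := (J.finite_toSet.image A).union (J.finite_toSet.image B)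
  have hsub : 𝒬 ⊆ 𝒟 := union_subset (image_subset_iff.2 fun q _ => hA𝒟 q)
    (image_subset_iff.2 fun q _ => hB𝒟 q)
  have exists_level_A (q) (hq : q ∈ J) (h : ∫⁻ x in A q, f x ∂σ ≠ 0) :
      ∃ t, IsLevel 𝒬 (cubeAv σ f) (A q) t :=
    exists_isLevel finite_𝒬 (fun R hR => cubeAv_ne_top hpp hf hfp (hσ R (hsub hR)))
      (Or.inl (mem_image_of_mem A hq)) (cubeAv_ne_zero (hσ _ (hA𝒟 q)) h)
  have exists_level_B (q) (hq : q ∈ J) (h : ∫⁻ x in B q, g x ∂w ≠ 0) :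
      ∃ s, IsLevel 𝒬 (cubeAv w g) (B q) s :=
    exists_isLevel finite_𝒬 (fun R hR => cubeAv_ne_top hpp.symm hg hgp (hw R (hsub hR)))
      (Or.inr (mem_image_of_mem B hq)) (cubeAv_ne_zero (hw _ (hB𝒟 q)) h)
  choose! F hF using exists_level_A
  choose! G hG using exists_level_B
  rw [← Finset.sum_filter_of_ne (p := fun q => ∫⁻ x in A q, f x ∂σ ≠ 0 ∧ ∫⁻ x in B q, g x ∂w ≠ 0)
    fun q _ hq => ⟨right_ne_zero_of_mul (left_ne_zero_of_mul hq), right_ne_zero_of_mul hq⟩]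
  refine sum_le_of_isLevel hpp (h𝒟.mono hsub) (fun R hR => hσ R (hsub hR))
    (fun R hR => hw R (hsub hR)) (hA.mono hsub) (hB.mono hsub) hU (hT.mono hsub) (hT'.mono hsub)
    hf hg (F := F) (G := G) (fun q hq => ?_) fun q hq => ?_
  · obtain ⟨hqJ, hqf, -⟩ := Finset.mem_filter.1 hq
    exact hF q hqJ hqf
  · obtain ⟨hqJ, -, hqg⟩ := Finset.mem_filter.1 hq
    exact hG q hqJ hqg

/-- The constant of the two-sided comparison of `‖Λ‖` with `𝒰 + 𝒯 + 𝒯*`. -/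
def testingConst (p p' : ℝ) : ℝ≥0∞ := 8 * carlesonConst p ^ (1 / p) * carlesonConst p' ^ (1 / p')

lemma testingConst_ne_top (hpp : p.HolderConjugate p') : testingConst p p' ≠ ⊤ :=
  ENNReal.mul_ne_top
    (ENNReal.mul_ne_top ENNReal.ofNat_ne_top
      (ENNReal.rpow_ne_top_of_nonneg hpp.one_div_nonneg (carlesonConst_ne_top hpp.lt)))
    (ENNReal.rpow_ne_top_of_nonneg hpp.symm.one_div_nonneg (carlesonConst_ne_top hpp.symm.lt))

lemma eight_le_testingConst (hpp : p.HolderConjugate p') : 8 ≤ testingConst p p' := by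
  rw [testingConst, mul_assoc]
  exact le_mul_of_one_le_right' <| one_le_mul
    (ENNReal.one_le_rpow (one_le_carlesonConst hpp.lt) hpp.one_div_pos)
    (ENNReal.one_le_rpow (one_le_carlesonConst hpp.symm.lt) hpp.symm.one_div_pos)

/-- A nonzero term of the form makes both norms and `U` nonzero, so the estimate is trivial as soon
as one of the norms is infinite. -/
lemma formBound_of_testingBound (hpp : p.HolderConjugate p') (h𝒟 : IsCubeFamily 𝒟)
    (hσ : ∀ R ∈ 𝒟, σ R ≠ ⊤) (hw : ∀ R ∈ 𝒟, w R ≠ ⊤) (hA𝒟 : ∀ q, A q ∈ 𝒟) (hB𝒟 : ∀ q, B q ∈ 𝒟)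
    (hA : IsChildMap 𝒟 A C) (hB : IsChildMap 𝒟 B C) (hU : PairBound σ w A B lam p p' U)
    (hT : TestingBound 𝒟 σ w A B C lam p p' T) (hT' : TestingBound 𝒟 w σ B A C lam p' p T') :
    FormBound σ w A B lam p p' (testingConst p p' * (U + T + T')) := by
  intro f g hf hg
  rw [ENNReal.tsum_eq_iSup_sum]
  refine iSup_le fun J => ?_
  rcases eq_or_ne (∑ q ∈ J, lam q * (∫⁻ x in A q, f x ∂σ) * ∫⁻ x in B q, g x ∂w) 0 with h0 | h0
  · exact h0.trans_le zero_le
  obtain ⟨q, -, hq⟩ := Finset.exists_ne_zero_of_sum_ne_zero h0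
  obtain ⟨⟨hlam, hfq⟩, hgq⟩ := by simpa only [mul_ne_zero_iff] using hq
  obtain ⟨norm_f_ne_zero, hσq⟩ := rpow_ne_zero_of_setLIntegral_ne_zero hpp hf hfq
  obtain ⟨norm_g_ne_zero, hwq⟩ := rpow_ne_zero_of_setLIntegral_ne_zero hpp.symm hg hgq
  have U_ne_zero : U ≠ 0 := ne_bot_of_le_ne_bot (mul_ne_zero (mul_ne_zero hlam hσq) hwq) (hU q)
  have const_ne_zero : testingConst p p' * (U + T + T') ≠ 0 :=
    mul_ne_zero (ne_bot_of_le_ne_bot (by norm_num) (eight_le_testingConst hpp))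
      (by simp [U_ne_zero])
  rcases eq_or_ne (∫⁻ x, f x ^ p ∂σ) ⊤ with hfp | hfp
  · rw [hfp, ENNReal.top_rpow_of_pos hpp.one_div_pos, ENNReal.mul_top const_ne_zero,
      ENNReal.top_mul norm_g_ne_zero]
    exact le_top
  rcases eq_or_ne (∫⁻ x, g x ^ p' ∂w) ⊤ with hgp | hgp
  · rw [hgp, ENNReal.top_rpow_of_pos hpp.symm.one_div_pos,
      ENNReal.mul_top (mul_ne_zero const_ne_zero norm_f_ne_zero)]
    exact le_top
  refine (sum_le_of_testingBound hpp h𝒟 hσ hw hA𝒟 hB𝒟 hA hB hU hT hT' hf hg hfp hgp J).trans_eq ?_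
  rw [ENNReal.mul_rpow_of_nonneg _ _ hpp.one_div_nonneg,
    ENNReal.mul_rpow_of_nonneg _ _ hpp.symm.one_div_nonneg, testingConst]
  ring

theorem statement19_general (hpp : p.HolderConjugate p') (h𝒟 : IsCubeFamily 𝒟)
    (hσ : ∀ R ∈ 𝒟, σ R ≠ ⊤) (hw : ∀ R ∈ 𝒟, w R ≠ ⊤) (hA𝒟 : ∀ q, A q ∈ 𝒟) (hB𝒟 : ∀ q, B q ∈ 𝒟)
    (hA : IsChildMap 𝒟 A C) (hB : IsChildMap 𝒟 B C) :
    ((∃ N, N ≠ ⊤ ∧ FormBound σ w A B lam p p' N) ↔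
      ∃ U T T', U ≠ ⊤ ∧ T ≠ ⊤ ∧ T' ≠ ⊤ ∧ PairBound σ w A B lam p p' U ∧
        TestingBound 𝒟 σ w A B C lam p p' T ∧ TestingBound 𝒟 w σ B A C lam p' p T') ∧
    (∀ N, FormBound σ w A B lam p p' N → ∃ U T T', PairBound σ w A B lam p p' U ∧
      TestingBound 𝒟 σ w A B C lam p p' T ∧ TestingBound 𝒟 w σ B A C lam p' p T' ∧
        U + T + T' ≤ testingConst p p' * N) ∧
    (∀ U T T', PairBound σ w A B lam p p' U → TestingBound 𝒟 σ w A B C lam p p' T →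
      TestingBound 𝒟 w σ B A C lam p' p T' →
        FormBound σ w A B lam p p' (testingConst p p' * (U + T + T'))) := by
  have necessity (N) (h : FormBound σ w A B lam p p' N) : PairBound σ w A B lam p p' N ∧
      TestingBound 𝒟 σ w A B C lam p p' N ∧ TestingBound 𝒟 w σ B A C lam p' p N :=
    ⟨h.pairBound hpp (fun q => h𝒟.measurableSet _ (hA𝒟 q)) (fun q => h𝒟.measurableSet _ (hB𝒟 q))
        (fun q => hσ _ (hA𝒟 q)) fun q => hw _ (hB𝒟 q),
      h.testingBound hpp.pos h𝒟.measurableSet fun q => (hA.ssubset q).subset,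
      h.symm.testingBound hpp.symm.pos h𝒟.measurableSet fun q => (hB.ssubset q).subset⟩
  have sufficiency (U T T') (hU : PairBound σ w A B lam p p' U) :=
    formBound_of_testingBound hpp h𝒟 hσ hw hA𝒟 hB𝒟 hA hB hU (T := T) (T' := T')
  refine ⟨⟨?_, ?_⟩, fun N h => ?_, sufficiency⟩
  · rintro ⟨N, hN, h⟩
    exact ⟨N, N, N, hN, hN, hN, necessity N h⟩
  · rintro ⟨U, T, T', hU_ne, hT_ne, hT'_ne, hU, hT, hT'⟩
    exact ⟨_, ENNReal.mul_ne_top (testingConst_ne_top hpp)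
      (ENNReal.add_ne_top.2 ⟨ENNReal.add_ne_top.2 ⟨hU_ne, hT_ne⟩, hT'_ne⟩),
      sufficiency U T T' hU hT hT'⟩
  · obtain ⟨hU, hT, hT'⟩ := necessity N h
    refine ⟨N, N, N, hU, hT, hT', ?_⟩
    calc N + N + N = 3 * N := by ring
      _ ≤ testingConst p p' * N := by
          gcongr
          exact le_trans (by norm_num) (eight_le_testingConst hpp)

end Sufficiency

/-! ### Dyadic cubes -/

section Dyadic

variable {d : ℕ} {q q' r c : DIdx d} {x : Fin d → ℝ}

lemma mem_dCube_iff : x ∈ dCube d q ↔ ∀ i, ⌊x i / 2 ^ q.1⌋ = q.2 i := by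
  have side_pos : (0 : ℝ) < 2 ^ q.1 := by positivity
  simp only [dCube, Set.mem_ofPred_eq, Int.floor_eq_iff, le_div_iff₀ side_pos,
    div_lt_iff₀ side_pos]

/-- The lower corner of the cube with index `q`. -/
def dCubeCorner (q : DIdx d) : Fin d → ℝ := fun i => (q.2 i : ℝ) * 2 ^ q.1

lemma dCubeCorner_mem (q : DIdx d) : dCubeCorner q ∈ dCube d q := by
  have side_pos : (0 : ℝ) < 2 ^ q.1 := by positivity
  simp [mem_dCube_iff, dCubeCorner, side_pos.ne']

lemma dCube_nonempty (q : DIdx d) : (dCube d q).Nonempty := ⟨_, dCubeCorner_mem q⟩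

lemma floor_div_two_zpow_add (y : ℝ) (k : ℤ) (m : ℕ) :
    ⌊y / 2 ^ (k + m)⌋ = ⌊y / 2 ^ k⌋ / ((2 ^ m : ℕ) : ℤ) := by
  rw [← Int.floor_div_natCast, zpow_add₀ two_ne_zero, div_div]
  push_cast
  rw [zpow_natCast]

lemma dCube_subset_of_mem (h : q.1 ≤ r.1) (hq : x ∈ dCube d q) (hr : x ∈ dCube d r) :
    dCube d q ⊆ dCube d r := by
  intro y hy
  obtain ⟨m, hm⟩ := Int.le.dest h
  rw [mem_dCube_iff] at *
  intro i
  rw [← hr i, ← hm, floor_div_two_zpow_add, floor_div_two_zpow_add, hq i, hy i]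

lemma eq_of_mem_dCube (h : q.1 = r.1) (hq : x ∈ dCube d q) (hr : x ∈ dCube d r) : q = r := by
  rw [mem_dCube_iff] at *
  refine Prod.ext h (funext fun i => ?_)
  rw [← hq i, ← hr i, h]

/-- Otherwise shifting the corner of the larger cube by the side length of the smaller one leaves
the smaller cube, but not the larger one. -/
lemma fst_le_of_dCube_subset (hd : 0 < d) (h : dCube d q ⊆ dCube d r) : q.1 ≤ r.1 := by
  by_contra! hlt
  have side_lt : (2 : ℝ) ^ r.1 < 2 ^ q.1 := zpow_lt_zpow_right₀ one_lt_two hlt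
  have side_pos : (0 : ℝ) < 2 ^ r.1 := by positivity
  have shift_mem : (fun i => dCubeCorner q i + 2 ^ r.1) ∈ dCube d r := by
    refine h fun i => ?_
    simp only [dCubeCorner]
    constructor <;> nlinarith
  have le_corner := (h (dCubeCorner_mem q) ⟨0, hd⟩).1
  have shift_lt := (shift_mem ⟨0, hd⟩).2
  linarith

lemma dCube_injective (hd : 0 < d) : Function.Injective (dCube d) := fun q _ h =>
  eq_of_mem_dCube ((fst_le_of_dCube_subset hd h.subset).antisymm
    (fst_le_of_dCube_subset hd h.symm.subset)) (dCubeCorner_mem q) (h ▸ dCubeCorner_mem q)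

lemma measurableSet_dCube (q : DIdx d) : MeasurableSet (dCube d q) := by
  have dCube_eq_pi : dCube d q =
      univ.pi fun i => Ico ((q.2 i : ℝ) * 2 ^ q.1) (((q.2 i : ℝ) + 1) * 2 ^ q.1) := by
    ext x
    simp [dCube]
  rw [dCube_eq_pi]
  exact MeasurableSet.univ_pi fun _ => measurableSet_Ico

lemma measure_dCube_ne_top (μ : Measure (Fin d → ℝ)) [IsLocallyFiniteMeasure μ] (q : DIdx d) :
    μ (dCube d q) ≠ ⊤ := by
  have subset_Icc : dCube d q ⊆
      Icc (fun i => (q.2 i : ℝ) * 2 ^ q.1) fun i => ((q.2 i : ℝ) + 1) * 2 ^ q.1 :=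
    fun x hx => ⟨fun i => (hx i).1, fun i => (hx i).2.le⟩
  exact measure_ne_top_of_subset subset_Icc isCompact_Icc.measure_ne_top

lemma isCubeFamily_range_dCube (d : ℕ) : IsCubeFamily (range (dCube d)) where
  measurableSet := forall_mem_range.2 measurableSet_dCube
  nonempty := forall_mem_range.2 dCube_nonempty
  nested := by
    rintro _ ⟨q, rfl⟩ _ ⟨r, rfl⟩ ⟨x, hq, hr⟩
    exact (le_total q.1 r.1).imp (dCube_subset_of_mem · hq hr) (dCube_subset_of_mem · hr hq)

lemma IsChildIdx.subset (h : IsChildIdx d q c) : dCube d c ⊆ dCube d q := by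
  refine dCube_subset_of_mem (h.1.trans_le (by omega)) (dCubeCorner_mem c) fun i => ?_
  have side_pos : (0 : ℝ) < 2 ^ c.1 := by positivity
  have side_eq : (2 : ℝ) ^ q.1 = 2 * 2 ^ c.1 := by
    rw [eq_add_of_sub_eq h.1.symm, zpow_add_one₀ two_ne_zero, mul_comm]
  simp only [dCubeCorner]
  rw [side_eq]
  rcases h.2 i with hi | hi <;> rw [hi] <;> push_cast <;> constructor <;> nlinarith

lemma IsChildIdx.parent_subset (hd : 0 < d) (h : IsChildIdx d q c) (hr : dCube d c ⊂ dCube d r) :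
    dCube d q ⊆ dCube d r := by
  have mem_r := hr.subset (dCubeCorner_mem c)
  have fst_ne : c.1 ≠ r.1 := fun heq =>
    hr.ne (congrArg (dCube d) (eq_of_mem_dCube heq (dCubeCorner_mem c) mem_r))
  have fst_le := fst_le_of_dCube_subset hd hr.subset
  refine dCube_subset_of_mem ?_ (h.subset (dCubeCorner_mem c)) mem_r
  have := h.1
  omega

lemma IsChildIdx.unique (h : IsChildIdx d q c) (h' : IsChildIdx d q' c) : q = q' := by
  refine Prod.ext (sub_left_injective (h.1.symm.trans h'.1)) (funext fun i => ?_)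
  have := h.2 i
  have := h'.2 i
  omega

lemma isChildMap_dCube (hd : 0 < d) {child : DIdx d → DIdx d}
    (h : ∀ q, IsChildIdx d q (child q)) :
    IsChildMap (range (dCube d)) (fun q => dCube d (child q)) (dCube d) where
  injective q q' heq := (h q).unique (dCube_injective hd heq ▸ h q')
  ssubset q := by
    refine (h q).subset.ssubset_of_ne fun heq => ?_
    have := (h q).1
    rw [dCube_injective hd heq] at this
    omega
  parent_subset q := forall_mem_range.2 fun _ hr => (h q).parent_subset hd hr

variable {σ w : Measure (Fin d → ℝ)} {lam : DIdx d → ℝ} {plusI minusI : DIdx d → DIdx d} {p : ℝ}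
  {N U T : ℝ≥0∞}

lemma one_div_conjExponent (hp : 1 < p) : 1 / (p / (p - 1)) = 1 - 1 / p := by
  rw [one_div_div, sub_div, div_self (by linarith)]

lemma formBound_dCube_iff :
    FormBound σ w (fun q => dCube d (plusI q)) (fun q => dCube d (minusI q))
        (fun q => ENNReal.ofReal (lam q)) p (p / (p - 1)) N ↔
      ∀ f g : (Fin d → ℝ) → ℝ≥0∞, Measurable f → Measurable g →
        posForm d σ w lam plusI minusI f g ≤
          N * lpNorm d σ p f * lpNorm d w (p / (p - 1)) g :=
  Iff.rfl

lemma pairBound_dCube_iff (hp : 1 < p) :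
    PairBound σ w (fun q => dCube d (plusI q)) (fun q => dCube d (minusI q))
        (fun q => ENNReal.ofReal (lam q)) p (p / (p - 1)) U ↔
      ∀ q, ENNReal.ofReal (lam q) * σ (dCube d (plusI q)) ^ (1 - 1 / p) *
        w (dCube d (minusI q)) ^ (1 / p) ≤ U := by
  simp only [PairBound, one_div_conjExponent hp]

lemma testingBound_dCube_iff :
    TestingBound (range (dCube d)) σ w (fun q => dCube d (plusI q))
        (fun q => dCube d (minusI q)) (dCube d)
        (fun q => ENNReal.ofReal (lam q)) p (p / (p - 1)) T ↔
      ∀ (r : DIdx d) (g : (Fin d → ℝ) → ℝ≥0∞), Measurable g →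
        posFormLoc d σ w lam plusI minusI r (fun _ => 1) g ≤
          T * σ (dCube d r) ^ (1 / p) * lpNorm d w (p / (p - 1)) g := by
  simp only [TestingBound, forall_mem_range, posFormLoc, _root_.lpNorm, setLIntegral_one]

lemma testingBound_dCube_swap_iff (hp : 1 < p) :
    TestingBound (range (dCube d)) w σ (fun q => dCube d (minusI q))
        (fun q => dCube d (plusI q)) (dCube d) (fun q => ENNReal.ofReal (lam q)) (p / (p - 1)) p T ↔
      ∀ (r : DIdx d) (f : (Fin d → ℝ) → ℝ≥0∞), Measurable f →
        posFormLoc d σ w lam plusI minusI r f (fun _ => 1) ≤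
          T * w (dCube d r) ^ (1 - 1 / p) * lpNorm d σ p f := by
  simp only [TestingBound, forall_mem_range, posFormLoc, _root_.lpNorm, setLIntegral_one,
    one_div_conjExponent hp, mul_right_comm]

end Dyadic

theorem statement19 (p : ℝ) (hp : 1 < p) :
    ∃ C : ℝ≥0∞, 0 < C ∧ C ≠ ⊤ ∧
      ∀ (d : ℕ), 0 < d →
      ∀ (σ w : Measure (Fin d → ℝ))
        [IsLocallyFiniteMeasure σ] [IsLocallyFiniteMeasure w]
        (lam : DIdx d → ℝ), (∀ q, 0 ≤ lam q) →
      ∀ plusI minusI : DIdx d → DIdx d,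
        (∀ q, IsChildIdx d q (plusI q)) →
        (∀ q, IsChildIdx d q (minusI q)) →
        (∀ q, plusI q ≠ minusI q) →
        -- `‖Λ‖ < ∞` iff `𝒰, 𝒯, 𝒯*` are all finite:
        (((∃ N : ℝ≥0∞, N ≠ ⊤ ∧ ∀ f g : (Fin d → ℝ) → ℝ≥0∞, Measurable f → Measurable g →
            posForm d σ w lam plusI minusI f g ≤
              N * lpNorm d σ p f * lpNorm d w (p / (p - 1)) g) ↔
          (∃ U T T' : ℝ≥0∞, U ≠ ⊤ ∧ T ≠ ⊤ ∧ T' ≠ ⊤ ∧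
            (∀ q, ENNReal.ofReal (lam q) * σ (dCube d (plusI q)) ^ (1 - 1 / p) *
              w (dCube d (minusI q)) ^ (1 / p) ≤ U) ∧
            (∀ (r : DIdx d) (g : (Fin d → ℝ) → ℝ≥0∞), Measurable g →
              posFormLoc d σ w lam plusI minusI r (fun _ => 1) g ≤
                T * σ (dCube d r) ^ (1 / p) * lpNorm d w (p / (p - 1)) g) ∧
            (∀ (r : DIdx d) (f : (Fin d → ℝ) → ℝ≥0∞), Measurable f →
              posFormLoc d σ w lam plusI minusI r f (fun _ => 1) ≤
                T' * w (dCube d r) ^ (1 - 1 / p) * lpNorm d σ p f))) ∧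
        -- `𝒰 + 𝒯 + 𝒯* ≲_p ‖Λ‖`:
        (∀ N : ℝ≥0∞,
          (∀ f g : (Fin d → ℝ) → ℝ≥0∞, Measurable f → Measurable g →
            posForm d σ w lam plusI minusI f g ≤
              N * lpNorm d σ p f * lpNorm d w (p / (p - 1)) g) →
          ∃ U T T' : ℝ≥0∞,
            (∀ q, ENNReal.ofReal (lam q) * σ (dCube d (plusI q)) ^ (1 - 1 / p) *
              w (dCube d (minusI q)) ^ (1 / p) ≤ U) ∧
            (∀ (r : DIdx d) (g : (Fin d → ℝ) → ℝ≥0∞), Measurable g →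
              posFormLoc d σ w lam plusI minusI r (fun _ => 1) g ≤
                T * σ (dCube d r) ^ (1 / p) * lpNorm d w (p / (p - 1)) g) ∧
            (∀ (r : DIdx d) (f : (Fin d → ℝ) → ℝ≥0∞), Measurable f →
              posFormLoc d σ w lam plusI minusI r f (fun _ => 1) ≤
                T' * w (dCube d r) ^ (1 - 1 / p) * lpNorm d σ p f) ∧
            U + T + T' ≤ C * N) ∧
        -- `‖Λ‖ ≲_p 𝒰 + 𝒯 + 𝒯*`:
        (∀ U T T' : ℝ≥0∞,
          (∀ q, ENNReal.ofReal (lam q) * σ (dCube d (plusI q)) ^ (1 - 1 / p) *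
            w (dCube d (minusI q)) ^ (1 / p) ≤ U) →
          (∀ (r : DIdx d) (g : (Fin d → ℝ) → ℝ≥0∞), Measurable g →
            posFormLoc d σ w lam plusI minusI r (fun _ => 1) g ≤
              T * σ (dCube d r) ^ (1 / p) * lpNorm d w (p / (p - 1)) g) →
          (∀ (r : DIdx d) (f : (Fin d → ℝ) → ℝ≥0∞), Measurable f →
            posFormLoc d σ w lam plusI minusI r f (fun _ => 1) ≤
              T' * w (dCube d r) ^ (1 - 1 / p) * lpNorm d σ p f) →
          ∀ f g : (Fin d → ℝ) → ℝ≥0∞, Measurable f → Measurable g →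
            posForm d σ w lam plusI minusI f g ≤
              (C * (U + T + T')) * lpNorm d σ p f * lpNorm d w (p / (p - 1)) g)) := by
  have hpp : p.HolderConjugate (p / (p - 1)) := .conjExponent hp
  refine ⟨testingConst p (p / (p - 1)),
    (by norm_num : (0 : ℝ≥0∞) < 8).trans_le (eight_le_testingConst hpp), testingConst_ne_top hpp,
    fun d hd σ w _ _ lam _ plusI minusI hplus hminus _ => ?_⟩
  have comparison := statement19_general (lam := fun q => ENNReal.ofReal (lam q)) hpp
    (isCubeFamily_range_dCube d) (forall_mem_range.2 (measure_dCube_ne_top σ))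
    (forall_mem_range.2 (measure_dCube_ne_top w)) (fun q => mem_range_self (plusI q))
    (fun q => mem_range_self (minusI q)) (isChildMap_dCube hd hplus) (isChildMap_dCube hd hminus)
  simp only [formBound_dCube_iff, pairBound_dCube_iff hp, testingBound_dCube_iff,
    testingBound_dCube_swap_iff hp] at comparison
  exact comparison
end
end
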